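/- arXiv:2107.10736 — 2 statements merged into one kernel-verified Lean document; each statement's English description precedes it below -/
import Mathlib

section
/- Suppose m is an odd positive integer. Then lim_{n→∞} μ([0,n] \ σ(L(Q))) / μ(σ(L(Q)) ∩ [0,n]) = 0, where μ denotes Lebesgue measure on ℝ; that is, the real component of the spectrum of L(Q) contains the main part of [0,∞). -/
open MeasureTheory Set Filter Topology Metric

open scoped Classical

noncomputable section

/-- The Bloch phase factor `e^{iπt}`. -/
def blochPhase (t : ℝ) : ℂ := Complex.exp (Complex.I * Real.pi * t)

/-- `Ψ` is a Bloch function of `L_t(Q)` with Bloch eigenvalue `lam`: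
nonzero, twice continuously differentiable, satisfies `-Ψ'' + QΨ = lam Ψ`
and `Ψ(x+π) = e^{iπt} Ψ(x)`. -/
def IsBlochPair {m : ℕ} (Q : ℝ → Matrix (Fin m) (Fin m) ℂ) (t : ℝ) (lam : ℂ)
    (Ψ : ℝ → Fin m → ℂ) : Prop :=
  Ψ ≠ 0 ∧ ContDiff ℝ 2 Ψ ∧
    (∀ x : ℝ, -(deriv (deriv Ψ) x) + (Q x).mulVec (Ψ x) = lam • Ψ x) ∧
    (∀ x : ℝ, Ψ (x + Real.pi) = blochPhase t • Ψ x)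

/-- `lam` is a Bloch eigenvalue of `L_t(Q)`. -/
def IsBlochEigenvalue {m : ℕ} (Q : ℝ → Matrix (Fin m) (Fin m) ℂ) (t : ℝ) (lam : ℂ) : Prop :=
  ∃ Ψ, IsBlochPair Q t lam Ψ

/-- `Ψ` is normalized: `∫₀^π |Ψ(x)|² dx = 1` (Euclidean norm on `ℂ^m`). -/
def IsNormalized {m : ℕ} (Ψ : ℝ → Fin m → ℂ) : Prop :=
  (∫ x in (0:ℝ)..Real.pi, ∑ i, ‖Ψ x i‖ ^ 2) = 1

/-- The index set `A(k,t)`. -/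
def Akt (k : ℤ) (t : ℝ) : Set ℤ :=
  if t ∈ Set.Ioo (-(2:ℝ)/3) (-(1:ℝ)/3) ∪ Set.Ioo ((1:ℝ)/3) ((2:ℝ)/3) then {k}
  else if t ∈ Set.Ioo (-(1:ℝ)/3) ((1:ℝ)/3) then {k, -k}
  else if t ∈ Set.Ioc ((2:ℝ)/3) 1 then {k, -k - 1}
  else if t ∈ Set.Ioo (-1 : ℝ) (-(2:ℝ)/3) then {k, -k + 1}
  else ∅

/-- The spectrum of `L(Q)`: the set of Bloch eigenvalues of `L_t(Q)` for some `t ∈ (-1,1]`. -/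
def SpecLQ {m : ℕ} (Q : ℝ → Matrix (Fin m) (Fin m) ℂ) : Set ℂ :=
  {lam | ∃ t ∈ Set.Ioc (-1:ℝ) 1, IsBlochEigenvalue Q t lam}


theorem ode_exists {𝔸 : Type*} [NormedRing 𝔸] [NormedAlgebra ℝ 𝔸] [CompleteSpace 𝔸]
    (A : ℝ → 𝔸) (hA : Continuous A) (K : ℝ) (hK : ∀ x, ‖A x‖ ≤ K) :
    ∃ Z : ℝ → 𝔸, Z 0 = 1 ∧ (∀ x, HasDerivAt Z (A x * Z x) x) ∧
      ∀ x, ‖Z x - 1‖ ≤ (Real.exp (K * |x|) - 1) * ‖(1:𝔸)‖ := by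
  have hK0 : 0 ≤ K := (norm_nonneg _).trans (hK 0)
  let T : ℕ → ℝ → 𝔸 := fun n => Nat.rec (fun _ => 1) (fun _ f x => ∫ s in (0:ℝ)..x, A s * f s) n
  have T0 : ∀ x, T 0 x = 1 := fun x => rfl
  have TS : ∀ n x, T (n+1) x = ∫ s in (0:ℝ)..x, A s * T n s := fun n x => rfl
  have Tc : ∀ n, Continuous (T n) := by
    intro n
    induction n with
    | zero => exact continuous_const
    | succ n ih =>
      exact intervalIntegral.continuous_primitive
        (fun a b => (hA.mul ih).intervalIntegrable a b) 0
  have Td : ∀ n x, HasDerivAt (T (n+1)) (A x * T n x) x := by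
    intro n x
    exact intervalIntegral.integral_hasDerivAt_right ((hA.mul (Tc n)).intervalIntegrable 0 x)
      ((hA.mul (Tc n)).stronglyMeasurableAtFilter _ _) (hA.mul (Tc n)).continuousAt
  have Tb : ∀ n x, ‖T n x‖ ≤ (K * |x|) ^ n / (n.factorial : ℝ) * ‖(1:𝔸)‖ := by
    intro n
    induction n with
    | zero => intro x; simp [T0]
    | succ n ih =>
      intro x
      rw [TS]
      refine (intervalIntegral.norm_integral_le_integral_norm_uIoc).trans ?_
      have h1 : ∫ s in Set.uIoc 0 x, ‖A s * T n s‖ ≤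
          ∫ s in Set.uIoc 0 x, (K ^ (n+1) / (n.factorial : ℝ) * ‖(1:𝔸)‖) * |s - 0| ^ n := by
        refine setIntegral_mono_on ?_ ?_ measurableSet_uIoc ?_
        · exact intervalIntegrable_iff.mp ((hA.mul (Tc n)).norm.intervalIntegrable 0 x)
        · exact intervalIntegrable_iff.mp (Continuous.intervalIntegrable (by fun_prop) 0 x)
        · intro s _
          refine (norm_mul_le _ _).trans ?_
          calc ‖A s‖ * ‖T n s‖ ≤ K * ((K * |s|) ^ n / (n.factorial : ℝ) * ‖(1:𝔸)‖) :=
                mul_le_mul (hK s) (ih s) (norm_nonneg _) hK0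
            _ = _ := by rw [sub_zero]; ring
      refine h1.trans (le_of_eq ?_)
      rw [integral_const_mul, integral_pow_abs_sub_uIoc, sub_zero, Nat.factorial_succ]
      push_cast
      rw [mul_pow]
      field_simp
  have hsum : ∀ c : ℝ, Summable fun n : ℕ => c ^ n / (n.factorial : ℝ) * ‖(1:𝔸)‖ :=
    fun c => (Real.summable_pow_div_factorial c).mul_right _
  have hTs : ∀ x, Summable fun n => T n x := fun x => .of_norm_bounded (hsum (K * |x|)) fun n => Tb n x
  refine ⟨fun x => ∑' n, T n x, ?_, ?_, ?_⟩
  · show ∑' n, T n 0 = 1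
    rw [tsum_eq_single 0]; · rfl
    intro n hn
    obtain ⟨k, rfl⟩ := Nat.exists_eq_succ_of_ne_zero hn
    simp [TS]
  · intro x
    let g' : ℕ → ℝ → 𝔸 := fun n y => Nat.casesOn n 0 (fun k => A y * T k y)
    let u : ℕ → ℝ := fun n => Nat.casesOn n 0
      (fun k => K * ((K * (|x|+1)) ^ k / (k.factorial : ℝ) * ‖(1:𝔸)‖))
    have hu : Summable u := by
      rw [← summable_nat_add_iff 1]
      exact (hsum (K * (|x|+1))).mul_left K
    have key := hasDerivAt_tsum_of_isPreconnected (g := T) (g' := g') (y₀ := 0) (y := x) (t := ball 0 (|x|+1)) hu isOpen_ball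
      (convex_ball _ _).isPreconnected ?_ ?_ ?_ (hTs 0) ?_
    · have : ∑' n, g' n x = A x * ∑' n, T n x := by
        rw [Summable.tsum_eq_zero_add]
        · change 0 + ∑' n, A x * T n x = _
          rw [zero_add, (hTs x).tsum_mul_left]
        · rw [← summable_nat_add_iff 1]
          exact (hTs x).mul_left (A x)
      rwa [this] at key
    · intro n y _
      cases n with
      | zero => exact hasDerivAt_const _ _
      | succ n => exact Td n y
    · intro n y hy
      cases n with
      | zero => simp [g', u]
      | succ n =>
        have hy' : |y| ≤ |x| + 1 := by
          have := mem_ball_zero_iff.mp hy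
          exact this.le
        refine (norm_mul_le _ _).trans (mul_le_mul (hK y) ((Tb n y).trans ?_) (norm_nonneg _) hK0)
        gcongr
    · simp; positivity
    · simp
  · intro x
    have h1 : ∑' n, T n x - 1 = ∑' n, T (n+1) x := by
      rw [(hTs x).tsum_eq_zero_add, T0]; simp
    rw [h1]
    have h2 : HasSum (fun n : ℕ => (K * |x|) ^ n / (n.factorial : ℝ)) (Real.exp (K * |x|)) := by
      rw [Real.exp_eq_exp_ℝ]
      exact NormedSpace.expSeries_div_hasSum_exp (K * |x|)
    have h3 : HasSum (fun n : ℕ => (K * |x|) ^ (n+1) / ((n+1).factorial : ℝ)) (Real.exp (K * |x|) - 1) := by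
      have := (hasSum_nat_add_iff' 1).mpr h2
      simpa using this
    exact tsum_of_norm_bounded (h3.mul_right _) fun n => Tb (n+1) x

theorem lin_unique {ι : Type*} [Fintype ι] [DecidableEq ι] 
    (A : ℝ → Matrix ι ι ℂ) (K : ℝ) (hK : ∀ x (v : ι → ℂ), ‖(A x).mulVec v‖ ≤ K * ‖v‖)
    (f g : ℝ → ι → ℂ) (x₀ : ℝ) (hf : ∀ x, HasDerivAt f ((A x).mulVec (f x)) x)
    (hg : ∀ x, HasDerivAt g ((A x).mulVec (g x)) x) (h : f x₀ = g x₀) : f = g := by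
  refine ODE_solution_unique_univ (v := fun t y => (A t).mulVec y) (s := fun _ => univ) (K := K.toNNReal) (t₀ := x₀) ?_ ?_ ?_ h
  · intro t
    apply LipschitzWith.lipschitzOnWith
    refine LipschitzWith.of_dist_le_mul fun y z => ?_
    rw [dist_eq_norm, dist_eq_norm, ← Matrix.mulVec_sub]
    refine (hK t _).trans ?_
    gcongr
    exact Real.le_coe_toNNReal K
  · exact fun t => ⟨hf t, mem_univ _⟩
  · exact fun t => ⟨hg t, mem_univ _⟩

section aux
open scoped Matrix.Norms.Operator

def sg (m : ℕ) : Fin m ⊕ Fin m → ℂ := Sum.elim (fun _ => 1) (fun _ => -1)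

def pp (m : ℕ) : Fin m ⊕ Fin m → Fin m := Sum.elim id id

def eE (m : ℕ) (ρ x : ℝ) (i : Fin m ⊕ Fin m) : ℂ := Complex.exp (Complex.I * ρ * x * sg m i)

def bB {m : ℕ} (Q : ℝ → Matrix (Fin m) (Fin m) ℂ) (x : ℝ) :
    Matrix (Fin m ⊕ Fin m) (Fin m ⊕ Fin m) ℂ := (Q x).submatrix (pp m) (pp m)

def cC (ρ : ℝ) : ℂ := 1 / (2 * Complex.I * ρ)

def gG {m : ℕ} (Q : ℝ → Matrix (Fin m) (Fin m) ℂ) (ρ : ℝ) (x : ℝ) :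
    Matrix (Fin m ⊕ Fin m) (Fin m ⊕ Fin m) ℂ :=
  Matrix.diagonal (sg m) * ((Complex.I * ρ) • 1 + cC ρ • bB Q x)

def aA {m : ℕ} (Q : ℝ → Matrix (Fin m) (Fin m) ℂ) (ρ : ℝ) (x : ℝ) :
    Matrix (Fin m ⊕ Fin m) (Fin m ⊕ Fin m) ℂ :=
  cC ρ • (Matrix.diagonal (fun i => sg m i * eE m ρ (-x) i) * bB Q x * Matrix.diagonal (eE m ρ x))

theorem norm_sg (m : ℕ) (i) : ‖sg m i‖ = 1 := by
  cases i <;> simp [sg]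

theorem norm_eE (m : ℕ) (ρ x : ℝ) (i) : ‖eE m ρ x i‖ = 1 := by
  have : eE m ρ x i = Complex.exp (((ρ * x * (sg m i).re : ℝ) : ℂ) * Complex.I) := by
    unfold eE
    congr 1
    cases i <;> simp [sg] <;> ring
  rw [this, Complex.norm_exp_ofReal_mul_I]

theorem eE_neg (m : ℕ) (ρ x : ℝ) (i) : eE m ρ x i * eE m ρ (-x) i = 1 := by
  unfold eE
  rw [← Complex.exp_add]
  simp

theorem norm_diag_le {ι : Type*} [Fintype ι] [DecidableEq ι] (d : ι → ℂ) (h : ∀ i, ‖d i‖ ≤ 1) :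
    ‖Matrix.diagonal d‖ ≤ 1 := by
  rw [Matrix.linfty_opNorm_diagonal]
  exact (pi_norm_le_iff_of_nonneg zero_le_one).mpr h

theorem norm_cC {ρ : ℝ} (hρ : 0 < ρ) : ‖cC ρ‖ ≤ 1 / ρ := by
  unfold cC
  rw [norm_div, norm_mul, norm_mul]
  simp only [norm_one, Complex.norm_I, Complex.norm_real, Real.norm_eq_abs, abs_of_pos hρ, Complex.norm_ofNat]
  apply one_div_le_one_div_of_le hρ
  linarith

theorem norm_aA {m : ℕ} (Q : ℝ → Matrix (Fin m) (Fin m) ℂ) (C ρ : ℝ) (hρ : 0 < ρ) (x : ℝ)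
    (hC : ‖bB Q x‖ ≤ C) : ‖aA Q ρ x‖ ≤ C / ρ := by
  have hC0 : 0 ≤ C := (norm_nonneg _).trans hC
  unfold aA
  rw [norm_smul]
  have h1 : ‖Matrix.diagonal (fun i => sg m i * eE m ρ (-x) i)‖ ≤ 1 :=
    norm_diag_le _ (fun i => by rw [norm_mul, norm_sg, norm_eE, one_mul])
  have h2 : ‖Matrix.diagonal (eE m ρ x)‖ ≤ 1 := norm_diag_le _ (fun i => (norm_eE ..).le)
  have h3 : ‖Matrix.diagonal (fun i => sg m i * eE m ρ (-x) i) * bB Q x * Matrix.diagonal (eE m ρ x)‖ ≤ C := by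
    refine (norm_mul_le _ _).trans ?_
    refine (mul_le_of_le_one_right (norm_nonneg _) h2).trans ?_
    refine (norm_mul_le _ _).trans ?_
    exact (mul_le_of_le_one_left (norm_nonneg _) h1).trans hC
  calc _ ≤ (1 / ρ) * C := mul_le_mul (norm_cC hρ) h3 (norm_nonneg _) (by positivity)
    _ = _ := by ring

theorem norm_gG {m : ℕ} (Q : ℝ → Matrix (Fin m) (Fin m) ℂ) (C ρ : ℝ) (hρ : 0 < ρ)
    (hC : ∀ x, ‖bB Q x‖ ≤ C) : ∃ K, ∀ x v, ‖(gG Q ρ x).mulVec v‖ ≤ K * ‖v‖ := by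
  refine ⟨‖(Complex.I * ρ) • (1 : Matrix (Fin m ⊕ Fin m) (Fin m ⊕ Fin m) ℂ)‖ + ‖cC ρ‖ * C, fun x v => ?_⟩
  refine (Matrix.linfty_opNorm_mulVec _ _).trans ?_
  gcongr
  unfold gG
  refine (norm_mul_le _ _).trans ?_
  refine (mul_le_of_le_one_left (norm_nonneg _) (norm_diag_le _ (fun i => (norm_sg ..).le))).trans ?_
  refine (norm_add_le _ _).trans ?_
  gcongr
  rw [norm_smul]
  gcongr
  exact hC x

theorem cont_bB {m : ℕ} (Q : ℝ → Matrix (Fin m) (Fin m) ℂ) (hQ : Continuous Q) :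
    Continuous (bB Q) := hQ.matrix_submatrix _ _

theorem cont_eE (m : ℕ) (ρ : ℝ) : Continuous (eE m ρ) := by
  unfold eE
  fun_prop

theorem cont_aA {m : ℕ} (Q : ℝ → Matrix (Fin m) (Fin m) ℂ) (hQ : Continuous Q) (ρ : ℝ) :
    Continuous (aA Q ρ) := by
  unfold aA
  have h1 : Continuous fun x => Matrix.diagonal (fun i => sg m i * eE m ρ (-x) i) := by
    apply Continuous.matrix_diagonal
    unfold eE
    fun_prop
  have h2 : Continuous fun x => Matrix.diagonal (eE m ρ x) := (cont_eE m ρ).matrix_diagonal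
  exact ((h1.mul (cont_bB Q hQ)).mul h2).const_smul (cC ρ)

theorem bdd_bB {m : ℕ} (Q : ℝ → Matrix (Fin m) (Fin m) ℂ) (hQ : Continuous Q)
    (hQper : ∀ x : ℝ, Q (x + Real.pi) = Q x) : ∃ C, ∀ x, ‖bB Q x‖ ≤ C := by
  have hp : Function.Periodic (bB Q) Real.pi := fun x => by unfold bB; rw [hQper]
  have := hp.isBounded_of_continuous Real.pi_ne_zero (cont_bB Q hQ)
  obtain ⟨C, hC⟩ := this.exists_norm_le
  exact ⟨C, fun x => hC _ (mem_range_self x)⟩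

theorem fund {m : ℕ} (Q : ℝ → Matrix (Fin m) (Fin m) ℂ) (hQ : Continuous Q) (C ρ : ℝ) (hρ : 0 < ρ)
    (hC : ∀ x, ‖bB Q x‖ ≤ C) :
    ∃ Z : ℝ → Matrix (Fin m ⊕ Fin m) (Fin m ⊕ Fin m) ℂ, Z 0 = 1 ∧
      ‖Z (Real.pi/2) - 1‖ ≤ (Real.exp (C / ρ * (Real.pi/2)) - 1) * ‖(1 : Matrix (Fin m ⊕ Fin m) (Fin m ⊕ Fin m) ℂ)‖ ∧
      ∀ (v : Fin m ⊕ Fin m → ℂ) x, HasDerivAt (fun x => (Matrix.diagonal (eE m ρ x)).mulVec ((Z x).mulVec v))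
        ((gG Q ρ x).mulVec ((Matrix.diagonal (eE m ρ x)).mulVec ((Z x).mulVec v))) x := by
  obtain ⟨Z, hZ0, hZd, hZb⟩ := ode_exists (aA Q ρ) (cont_aA Q hQ ρ) (C/ρ) (fun x => norm_aA Q C ρ hρ x (hC x))
  refine ⟨Z, hZ0, ?_, ?_⟩
  · have := hZb (Real.pi/2)
    rwa [abs_of_pos (by positivity)] at this
  · intro v x
    have hY : HasDerivAt (fun x => (Z x).mulVec v) ((aA Q ρ x).mulVec ((Z x).mulVec v)) x := by
      let L : Matrix (Fin m ⊕ Fin m) (Fin m ⊕ Fin m) ℂ →ₗ[ℝ] (Fin m ⊕ Fin m → ℂ) :=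
        { toFun := fun M => M.mulVec v
          map_add' := fun M N => Matrix.add_mulVec M N v
          map_smul' := fun r M => Matrix.smul_mulVec r M v }
      have := (LinearMap.toContinuousLinearMap L).hasFDerivAt.comp_hasDerivAt x (hZd x)
      rw [Matrix.mulVec_mulVec]
      exact this
    set Y := fun x => (Z x).mulVec v with hYdef
    rw [hasDerivAt_pi] at hY ⊢
    intro i
    have he : HasDerivAt (fun x : ℝ => eE m ρ x i) (Complex.I * ρ * sg m i * eE m ρ x i) x := by
      have h0 : HasDerivAt (fun x : ℝ => Complex.I * ρ * x * sg m i) (Complex.I * ρ * sg m i) x := by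
        have := ((Complex.ofRealCLM.hasDerivAt (x := x)).const_mul (Complex.I * ρ)).mul_const (sg m i)
        simpa using this
      have := h0.cexp
      unfold eE
      convert! this using 1
      ring
    have h := he.mul (hY i)
    have hfun : (fun x => (Matrix.diagonal (eE m ρ x)).mulVec (Y x) i) = (fun x => eE m ρ x i) * fun x => Y x i := by
      funext y
      simp [Matrix.mulVec_diagonal]
    change HasDerivAt (fun x => (Matrix.diagonal (eE m ρ x)).mulVec (Y x) i) _ x
    rw [hfun]
    refine h.congr_deriv ?_
    change _ = (gG Q ρ x).mulVec ((Matrix.diagonal (eE m ρ x)).mulVec (Y x)) i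
    change _ + _ * (aA Q ρ x).mulVec (Y x) i = _
    unfold gG aA
    rw [Matrix.smul_mulVec, ← Matrix.mulVec_mulVec, ← Matrix.mulVec_mulVec, ← Matrix.mulVec_mulVec,
      Matrix.add_mulVec, Matrix.smul_mulVec, Matrix.smul_mulVec, Matrix.one_mulVec]
    simp only [Matrix.mulVec_diagonal, Pi.smul_apply, Pi.add_apply, smul_eq_mul]
    linear_combination (sg m i * cC ρ * ((bB Q x).mulVec ((Matrix.diagonal (eE m ρ x)).mulVec (Y x)) i)) * eE_neg m ρ x i

theorem gG_apply {m : ℕ} (Q : ℝ → Matrix (Fin m) (Fin m) ℂ) (ρ x : ℝ) (X : Fin m ⊕ Fin m → ℂ) (i) :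
    (gG Q ρ x).mulVec X i = sg m i * (Complex.I * ρ * X i +
      cC ρ * (Q x).mulVec (fun k => X (Sum.inl k) + X (Sum.inr k)) (pp m i)) := by
  unfold gG bB
  rw [← Matrix.mulVec_mulVec, Matrix.add_mulVec, Matrix.smul_mulVec, Matrix.smul_mulVec, Matrix.one_mulVec]
  simp only [Matrix.mulVec_diagonal, Pi.smul_apply, Pi.add_apply, smul_eq_mul]
  congr 3
  simp [Matrix.mulVec, dotProduct, pp, mul_add, Finset.sum_add_distrib]

theorem gG_conj {m : ℕ} (Q : ℝ → Matrix (Fin m) (Fin m) ℂ)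
    (hQPT : ∀ (x : ℝ) (i j : Fin m), (starRingEnd ℂ) (Q (-x) i j) = Q x i j) (ρ x : ℝ) (X : Fin m ⊕ Fin m → ℂ) (i) :
    (starRingEnd ℂ) ((gG Q ρ (-x)).mulVec X i) = - (gG Q ρ x).mulVec (fun j => (starRingEnd ℂ) (X j)) i := by
  rw [gG_apply, gG_apply]
  have hs : (starRingEnd ℂ) (sg m i) = sg m i := by cases i <;> simp [sg]
  have hc : (starRingEnd ℂ) (cC ρ) = - cC ρ := by
    unfold cC
    have h2 : (starRingEnd ℂ) 2 = 2 := map_ofNat _ 2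
    simp [div_eq_mul_inv, h2]
  have hq : (starRingEnd ℂ) ((Q (-x)).mulVec (fun k => X (Sum.inl k) + X (Sum.inr k)) (pp m i)) =
     (Q x).mulVec (fun k => (starRingEnd ℂ) (X (Sum.inl k)) + (starRingEnd ℂ) (X (Sum.inr k))) (pp m i) := by
    simp only [Matrix.mulVec, dotProduct, map_sum, map_mul, map_add, hQPT]
  simp only [map_mul, map_add, hs, hc, hq, Complex.conj_I, Complex.conj_ofReal]
  ring

end aux

section aux2

def dU (m : ℕ) (u : ℂ) : Fin m ⊕ Fin m → ℂ := Sum.elim (fun _ => u) (fun _ => (starRingEnd ℂ) u)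

theorem cont_dU (m : ℕ) : Continuous (dU m) := by
  unfold dU
  refine continuous_pi fun i => ?_
  cases i
  · exact continuous_id
  · exact Complex.continuous_conj

theorem det_e1 (m : ℕ) (hm : Odd m) (u : ℂ) (δ : ℝ) (hδ : 0 < δ) (hre : δ ≤ |u.re|) (him : δ ≤ |u.im|) :
    ((Matrix.diagonal (dU m u) * (1 : Matrix (Fin m ⊕ Fin m) (Fin m ⊕ Fin m) ℂ)).map Complex.im).det < 0 := by
  rw [mul_one, Matrix.diagonal_map Complex.zero_im, Matrix.det_diagonal, Fintype.prod_sum_type]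
  simp only [dU, Sum.elim_inl, Sum.elim_inr, Finset.prod_const, Finset.card_univ, Fintype.card_fin, Complex.conj_im]
  rw [← mul_pow]
  apply hm.pow_neg
  have : 0 < |u.im| := by linarith
  have := abs_pos.mp this
  have := sq_pos_of_ne_zero this
  nlinarith


theorem det_e2 (m : ℕ) (hm : Odd m) (u : ℂ) (δ : ℝ) (hδ : 0 < δ) (hre : δ ≤ |u.re|) (him : δ ≤ |u.im|) :
    0 < (((-Complex.I) • (Matrix.diagonal (dU m u) * (1 : Matrix (Fin m ⊕ Fin m) (Fin m ⊕ Fin m) ℂ))).map Complex.im).det := by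
  rw [mul_one, ← Matrix.diagonal_smul, Matrix.diagonal_map Complex.zero_im, Matrix.det_diagonal, Fintype.prod_sum_type]
  simp only [dU, Sum.elim_inl, Sum.elim_inr, Finset.prod_const, Finset.card_univ, Fintype.card_fin, Pi.smul_apply, smul_eq_mul]
  rw [← mul_pow]
  apply pow_pos
  have : 0 < |u.re| := by linarith
  have := abs_pos.mp this
  have := sq_pos_of_ne_zero this
  simp
  nlinarith


theorem det_sign (m : ℕ) (hm : Odd m) (δ : ℝ) (hδ : 0 < δ) :
    ∀ᶠ P in 𝓝 (1 : Matrix (Fin m ⊕ Fin m) (Fin m ⊕ Fin m) ℂ),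
      ∀ u ∈ {u : ℂ | ‖u‖ = 1 ∧ δ ≤ |u.re| ∧ δ ≤ |u.im|},
        ((Matrix.diagonal (dU m u) * P).map Complex.im).det < 0 ∧
        0 < (((-Complex.I) • (Matrix.diagonal (dU m u) * P)).map Complex.im).det := by
  have hKc : IsCompact {u : ℂ | ‖u‖ = 1 ∧ δ ≤ |u.re| ∧ δ ≤ |u.im|} := by
    refine (isCompact_closedBall (0:ℂ) 1).of_isClosed_subset ?_ ?_
    · refine (isClosed_eq continuous_norm continuous_const).inter
        ((isClosed_le continuous_const (Complex.continuous_re.abs)).inter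
          (isClosed_le continuous_const (Complex.continuous_im.abs)))
    · rintro u ⟨h, -⟩
      simp [h]
  refine hKc.eventually_forall_of_forall_eventually
    (P := fun P u => ((Matrix.diagonal (dU m u) * P).map Complex.im).det < 0 ∧
        0 < (((-Complex.I) • (Matrix.diagonal (dU m u) * P)).map Complex.im).det) ?_
  rintro u ⟨-, hre, him⟩
  have hc : Continuous fun z : Matrix (Fin m ⊕ Fin m) (Fin m ⊕ Fin m) ℂ × ℂ =>
      Matrix.diagonal (dU m z.2) * z.1 :=
    (((cont_dU m).comp continuous_snd).matrix_diagonal).mul continuous_fst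
  have c1 : Continuous fun z : Matrix (Fin m ⊕ Fin m) (Fin m ⊕ Fin m) ℂ × ℂ =>
      ((Matrix.diagonal (dU m z.2) * z.1).map Complex.im).det :=
    (hc.matrix_map Complex.continuous_im).matrix_det
  have c2 : Continuous fun z : Matrix (Fin m ⊕ Fin m) (Fin m ⊕ Fin m) ℂ × ℂ =>
      (((-Complex.I) • (Matrix.diagonal (dU m z.2) * z.1)).map Complex.im).det :=
    ((hc.const_smul (-Complex.I)).matrix_map Complex.continuous_im).matrix_det
  have e1 := det_e1 m hm u δ hδ hre him
  have e2 := det_e2 m hm u δ hδ hre him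
  have o1 : {z : Matrix (Fin m ⊕ Fin m) (Fin m ⊕ Fin m) ℂ × ℂ |
      ((Matrix.diagonal (dU m z.2) * z.1).map Complex.im).det < 0} ∈ 𝓝
        ((1 : Matrix (Fin m ⊕ Fin m) (Fin m ⊕ Fin m) ℂ), u) :=
    (isOpen_lt c1 continuous_const).mem_nhds e1
  have o2 : {z : Matrix (Fin m ⊕ Fin m) (Fin m ⊕ Fin m) ℂ × ℂ |
      0 < (((-Complex.I) • (Matrix.diagonal (dU m z.2) * z.1)).map Complex.im).det} ∈ 𝓝
        ((1 : Matrix (Fin m ⊕ Fin m) (Fin m ⊕ Fin m) ℂ), u) :=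
    (isOpen_lt continuous_const c2).mem_nhds e2
  filter_upwards [o1, o2] with z h1 h2
  exact ⟨h1, h2⟩

theorem exists_phase {ι : Type*} [Fintype ι] [DecidableEq ι] (S : Matrix ι ι ℂ)
    (h1 : (S.map Complex.im).det < 0) (h2 : 0 < (((-Complex.I) • S).map Complex.im).det) :
    ∃ φ ∈ Set.Icc 0 (Real.pi/2), ∃ v : ι → ℝ, v ≠ 0 ∧
      S.mulVec (fun i => (v i : ℂ)) = Complex.exp (2 * Complex.I * φ) •
        (fun i => (starRingEnd ℂ) (S.mulVec (fun i => (v i : ℂ)) i)) := by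
  let g : ℝ → ℝ := fun φ => ((Complex.exp (-Complex.I * φ) • S).map Complex.im).det
  have hg : Continuous g := by
    have : Continuous fun φ : ℝ => Complex.exp (-Complex.I * φ) • S := by
      have : Continuous fun φ : ℝ => Complex.exp (-Complex.I * φ) := by fun_prop
      exact this.smul continuous_const
    exact (this.matrix_map Complex.continuous_im).matrix_det
  have g0 : g 0 < 0 := by simpa [g] using h1
  have g1 : 0 < g (Real.pi/2) := by
    have : Complex.exp (-Complex.I * ((Real.pi/2 : ℝ) : ℂ)) = -Complex.I := by
      refine Eq.trans ?_ Complex.exp_neg_pi_div_two_mul_I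
      congr 1
      push_cast
      ring
    simp only [g, this]
    exact h2
  obtain ⟨φ, hφ, hφ0⟩ := intermediate_value_Icc (by positivity : (0:ℝ) ≤ Real.pi/2) hg.continuousOn ⟨g0.le, g1.le⟩
  refine ⟨φ, hφ, ?_⟩
  obtain ⟨v, hv0, hv⟩ := Matrix.exists_mulVec_eq_zero_iff.mpr hφ0
  refine ⟨v, hv0, ?_⟩
  set w := S.mulVec (fun i => (v i : ℂ)) with hw
  funext i
  have him : (Complex.exp (-Complex.I * φ) * w i).im = 0 := by
    have := congrFun hv i
    rw [hw, ← smul_eq_mul, ← Pi.smul_apply, ← Matrix.smul_mulVec]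
    simp only [Matrix.mulVec, dotProduct, Matrix.map_apply, Pi.zero_apply] at this ⊢
    rw [Complex.im_sum, ← this]
    refine Finset.sum_congr rfl fun j _ => ?_
    rw [Complex.im_mul_ofReal]
  have hcj := Complex.conj_eq_iff_im.mpr him
  rw [map_mul, ← Complex.exp_conj] at hcj
  simp only [map_mul, map_neg, Complex.conj_I, neg_neg, Complex.conj_ofReal] at hcj
  simp only [Pi.smul_apply, smul_eq_mul]
  have e1 : Complex.exp (2 * Complex.I * φ) = Complex.exp (Complex.I * φ) * Complex.exp (Complex.I * φ) := by
    rw [← Complex.exp_add]; congr 1; ring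
  have e2 : Complex.exp (Complex.I * φ) * Complex.exp (-Complex.I * φ) = 1 := by
    rw [← Complex.exp_add]; simp
  rw [e1, mul_assoc, hcj, ← mul_assoc, e2, one_mul]

open scoped Matrix.Norms.Operator

theorem spec_of_signs {m : ℕ} (Q : ℝ → Matrix (Fin m) (Fin m) ℂ) (hQ : Continuous Q)
    (hQper : ∀ x : ℝ, Q (x + Real.pi) = Q x)
    (hQPT : ∀ (x : ℝ) (i j : Fin m), (starRingEnd ℂ) (Q (-x) i j) = Q x i j)
    (K ρ : ℝ) (hρ : 0 < ρ) (hK : ∀ x v, ‖(gG Q ρ x).mulVec v‖ ≤ K * ‖v‖)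
    (Z : ℝ → Matrix (Fin m ⊕ Fin m) (Fin m ⊕ Fin m) ℂ) (hZ0 : Z 0 = 1)
    (hZ : ∀ (v : Fin m ⊕ Fin m → ℂ) x, HasDerivAt (fun x => (Matrix.diagonal (eE m ρ x)).mulVec ((Z x).mulVec v))
        ((gG Q ρ x).mulVec ((Matrix.diagonal (eE m ρ x)).mulVec ((Z x).mulVec v))) x)
    (h1 : ((Matrix.diagonal (eE m ρ (Real.pi/2)) * Z (Real.pi/2)).map Complex.im).det < 0)
    (h2 : 0 < (((-Complex.I) • (Matrix.diagonal (eE m ρ (Real.pi/2)) * Z (Real.pi/2))).map Complex.im).det) :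
    ((ρ ^ 2 : ℝ) : ℂ) ∈ SpecLQ Q := by
  obtain ⟨φ, hφ, v, hv0, hv⟩ := exists_phase _ h1 h2
  set vc : Fin m ⊕ Fin m → ℂ := fun i => (v i : ℂ) with hvc
  let X : ℝ → Fin m ⊕ Fin m → ℂ := fun x => (Matrix.diagonal (eE m ρ x)).mulVec ((Z x).mulVec vc)
  have hX : ∀ x, HasDerivAt X ((gG Q ρ x).mulVec (X x)) x := hZ vc
  have hX0 : X 0 = vc := by
    funext i
    simp [X, hZ0, Matrix.mulVec_diagonal, eE]
  -- reflection symmetry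
  have hrefl : X = fun x i => (starRingEnd ℂ) (X (-x) i) := by
    refine lin_unique (gG Q ρ) K hK _ _ 0 hX ?_ ?_
    · intro x
      rw [hasDerivAt_pi]
      intro i
      have h3 := (hasDerivAt_pi.mp ((hX (-x)).scomp x (hasDerivAt_neg x))) i
      have h4 := Complex.conjCLE.toContinuousLinearMap.hasFDerivAt.comp_hasDerivAt x h3
      refine HasDerivAt.congr_deriv h4 ?_
      change (starRingEnd ℂ) (((-1 : ℝ) • (gG Q ρ (-x)).mulVec (X (-x))) i) = _
      rw [neg_one_smul, Pi.neg_apply, map_neg, gG_conj Q hQPT, neg_neg]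
    · funext i
      simp [hX0, hvc]
  set z : ℂ := Complex.exp (2 * Complex.I * φ) with hz
  have hper : (fun x => X (x + Real.pi)) = fun x => z • X x := by
    refine lin_unique (gG Q ρ) K hK _ _ (-(Real.pi/2)) ?_ ?_ ?_
    · intro x
      have := (hX (x + Real.pi)).comp_add_const x Real.pi
      have hG : gG Q ρ (x + Real.pi) = gG Q ρ x := by unfold gG bB; rw [hQper]
      rwa [hG] at this
    · intro x
      rw [Matrix.mulVec_smul]
      exact (hX x).const_smul z
    · have e : -(Real.pi/2) + Real.pi = Real.pi/2 := by ring
      have hv' : X (Real.pi/2) = z • fun i => (starRingEnd ℂ) (X (Real.pi/2) i) := by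
        have : X (Real.pi/2) = (Matrix.diagonal (eE m ρ (Real.pi/2)) * Z (Real.pi/2)).mulVec vc := by
          simp only [X, Matrix.mulVec_mulVec]
        rw [this]; exact hv
      change X (-(Real.pi/2) + Real.pi) = z • X (-(Real.pi/2))
      rw [e, hv']
      congr 1
      have := congrFun hrefl (-(Real.pi/2))
      rw [this, neg_neg]
  let Ψ : ℝ → Fin m → ℂ := fun x k => X x (Sum.inl k) + X x (Sum.inr k)
  let Φ : ℝ → Fin m → ℂ := fun x k => Complex.I * ρ * (X x (Sum.inl k) - X x (Sum.inr k))
  have hΨ : ∀ x, HasDerivAt Ψ (Φ x) x := by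
    intro x
    rw [hasDerivAt_pi]
    intro k
    have a := hasDerivAt_pi.mp (hX x) (Sum.inl k)
    have b := hasDerivAt_pi.mp (hX x) (Sum.inr k)
    refine HasDerivAt.congr_deriv (a.add b) ?_
    rw [gG_apply, gG_apply]
    simp only [sg, pp, Sum.elim_inl, Sum.elim_inr, id, Φ]
    ring
  have hΦ : ∀ x, HasDerivAt Φ ((Q x).mulVec (Ψ x) - ((ρ^2 : ℝ) : ℂ) • Ψ x) x := by
    intro x
    rw [hasDerivAt_pi]
    intro k
    have a := hasDerivAt_pi.mp (hX x) (Sum.inl k)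
    have b := hasDerivAt_pi.mp (hX x) (Sum.inr k)
    refine HasDerivAt.congr_deriv ((a.sub b).const_mul (Complex.I * ρ)) ?_
    rw [gG_apply, gG_apply]
    have hc : 2 * (Complex.I * ρ) * cC ρ = 1 := by
      unfold cC
      have : (ρ : ℂ) ≠ 0 := by exact_mod_cast hρ.ne'
      field_simp [Complex.I_ne_zero]
    simp only [sg, pp, Sum.elim_inl, Sum.elim_inr, id, Ψ, Pi.sub_apply, Pi.smul_apply, smul_eq_mul]
    push_cast
    linear_combination ((Q x).mulVec (fun k => X x (Sum.inl k) + X x (Sum.inr k)) k) * hc + (ρ:ℂ)^2 * (X x (Sum.inl k) + X x (Sum.inr k)) * Complex.I_sq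
  have dΨ : deriv Ψ = Φ := funext fun x => (hΨ x).deriv
  have dΦ : deriv Φ = fun x => (Q x).mulVec (Ψ x) - ((ρ^2 : ℝ) : ℂ) • Ψ x := funext fun x => (hΦ x).deriv
  have cΨ : Continuous Ψ := continuous_iff_continuousAt.mpr fun x => (hΨ x).continuousAt
  refine ⟨2 * φ / Real.pi, ?_, Ψ, ?_, ?_, ?_, ?_⟩
  · obtain ⟨h, h'⟩ := hφ
    have hp := Real.pi_pos
    constructor
    · have : 0 ≤ 2 * φ / Real.pi := by positivity
      linarith
    · rw [div_le_one hp]; linarith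
  · intro h0
    apply hv0
    have hΦ0 : Φ = 0 := by
      rw [← dΨ, h0]
      funext x
      simp
    funext i
    have p : ∀ k, X 0 (Sum.inl k) + X 0 (Sum.inr k) = 0 := fun k => congrFun (congrFun h0 0) k
    have q : ∀ k, X 0 (Sum.inl k) - X 0 (Sum.inr k) = 0 := fun k => by
      have := congrFun (congrFun hΦ0 0) k
      have hne : Complex.I * (ρ:ℂ) ≠ 0 := mul_ne_zero Complex.I_ne_zero (by exact_mod_cast hρ.ne')
      exact (mul_eq_zero.mp this).resolve_left hne
    have hall : ∀ i, X 0 i = 0 := by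
      rintro (k | k)
      · linear_combination (p k + q k) / 2
      · linear_combination (p k - q k) / 2
    have := hall i
    rw [hX0] at this
    simpa [hvc] using this
  · have hc2 : ContDiff ℝ 1 Φ := by
      rw [contDiff_one_iff_deriv]
      refine ⟨fun x => (hΦ x).differentiableAt, ?_⟩
      rw [dΦ]
      have cs : Continuous fun x => ((ρ^2 : ℝ) : ℂ) • Ψ x := cΨ.const_smul ((ρ^2 : ℝ) : ℂ)
      exact (hQ.matrix_mulVec cΨ).sub cs
    have : ContDiff ℝ (1 + 1) Ψ := by
      rw [contDiff_succ_iff_deriv]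
      refine ⟨fun x => (hΨ x).differentiableAt, by simp, ?_⟩
      rwa [dΨ]
    simpa [one_add_one_eq_two] using this
  · intro x
    rw [dΨ, dΦ]
    simp
  · intro x
    have hb : blochPhase (2 * φ / Real.pi) = z := by
      unfold blochPhase
      rw [hz]
      congr 1
      have : (Real.pi : ℂ) ≠ 0 := by exact_mod_cast Real.pi_ne_zero
      push_cast
      field_simp
    rw [hb]
    have := congrFun hper x
    funext k
    have a := congrFun this (Sum.inl k)
    have b := congrFun this (Sum.inr k)
    simp only [Pi.smul_apply, smul_eq_mul, Ψ] at a b ⊢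
    rw [a, b]; ring

theorem spec_large {m : ℕ} (hm : Odd m) (Q : ℝ → Matrix (Fin m) (Fin m) ℂ) (hQ : Continuous Q)
    (hQper : ∀ x : ℝ, Q (x + Real.pi) = Q x)
    (hQPT : ∀ (x : ℝ) (i j : Fin m), (starRingEnd ℂ) (Q (-x) i j) = Q x i j) (δ : ℝ) (hδ : 0 < δ) :
    ∀ᶠ ρ : ℝ in atTop, δ ≤ |Real.cos (ρ * (Real.pi/2))| → δ ≤ |Real.sin (ρ * (Real.pi/2))| →
      ((ρ ^ 2 : ℝ) : ℂ) ∈ SpecLQ Q := by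
  obtain ⟨C, hC⟩ := bdd_bB Q hQ hQper
  obtain ⟨ε, hε, hball⟩ := Metric.eventually_nhds_iff.mp (det_sign m hm δ hδ)
  have hlim : Tendsto (fun ρ : ℝ => (Real.exp (C / ρ * (Real.pi/2)) - 1) * ‖(1 : Matrix (Fin m ⊕ Fin m) (Fin m ⊕ Fin m) ℂ)‖) atTop (𝓝 0) := by
    have h1 : Tendsto (fun ρ : ℝ => C / ρ) atTop (𝓝 0) := tendsto_const_nhds.div_atTop tendsto_id
    have h2 := ((Real.continuous_exp.tendsto _).comp (h1.mul_const (Real.pi/2))).sub_const 1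
    have h3 := h2.mul_const ‖(1 : Matrix (Fin m ⊕ Fin m) (Fin m ⊕ Fin m) ℂ)‖
    simpa using h3
  filter_upwards [hlim.eventually_lt_const hε, eventually_gt_atTop 0] with ρ hρε hρ hcos hsin
  obtain ⟨Z, hZ0, hZb, hZ⟩ := fund Q hQ C ρ hρ hC
  obtain ⟨K, hK⟩ := norm_gG Q C ρ hρ hC
  have hu : eE m ρ (Real.pi/2) = dU m (Complex.exp (((ρ * (Real.pi/2) : ℝ) : ℂ) * Complex.I)) := by
    funext i
    cases i with
    | inl k => simp only [eE, dU, sg, Sum.elim_inl]; congr 1; push_cast; ring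
    | inr k =>
      simp only [eE, dU, sg, Sum.elim_inr]
      rw [← Complex.exp_conj]
      congr 1
      simp only [map_mul, Complex.conj_ofReal, Complex.conj_I]
      push_cast; ring
  have := hball (y := Z (Real.pi/2)) (by rw [dist_eq_norm]; exact hZb.trans_lt hρε)
    (Complex.exp (((ρ * (Real.pi/2) : ℝ) : ℂ) * Complex.I))
    ⟨Complex.norm_exp_ofReal_mul_I _, by rwa [Complex.exp_ofReal_mul_I_re], by rwa [Complex.exp_ofReal_mul_I_im]⟩
  rw [← hu] at this
  exact spec_of_signs Q hQ hQper hQPT K ρ hρ hK Z hZ0 hZ this.1 this.2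

end aux2

section aux3

theorem sin_cos_of_far (ρ η : ℝ) (h : η ≤ |ρ - round ρ|) :
    η ≤ |Real.cos (ρ * (Real.pi/2))| ∧ η ≤ |Real.sin (ρ * (Real.pi/2))| := by
  set r := ρ - round ρ with hr
  have hr2 : |r| ≤ 1/2 := abs_sub_round ρ
  have hp := Real.pi_pos
  have h1 : 2 * |r| ≤ |Real.sin (Real.pi * r)| := by
    have : |Real.pi * r| ≤ Real.pi / 2 := by
      rw [abs_mul, abs_of_pos hp]; nlinarith
    have := Real.mul_abs_le_abs_sin this
    rw [abs_mul, abs_of_pos hp] at this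
    calc 2 * |r| = 2 / Real.pi * (Real.pi * |r|) := by field_simp
      _ ≤ _ := this
  have h2 : |Real.sin (Real.pi * r)| = |Real.sin (2 * (ρ * (Real.pi/2)))| := by
    have : Real.pi * r = 2 * (ρ * (Real.pi/2)) - round ρ * Real.pi := by rw [hr]; ring
    rw [this, Real.sin_sub_int_mul_pi, abs_mul, abs_zpow, abs_neg, abs_one, one_zpow, one_mul]
  rw [h2, Real.sin_two_mul, abs_mul, abs_mul, abs_two] at h1
  have hs := Real.abs_sin_le_one (ρ * (Real.pi/2))
  have hc := Real.abs_cos_le_one (ρ * (Real.pi/2))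
  have hs0 := abs_nonneg (Real.sin (ρ * (Real.pi/2)))
  have hc0 := abs_nonneg (Real.cos (ρ * (Real.pi/2)))
  constructor <;> nlinarith

theorem bad_bound (S : Set ℝ) (η R : ℝ) (hη : 0 < η) (hη1 : η ≤ 1) (hR : 0 ≤ R)
    (h : ∀ ρ, R ≤ ρ → η ≤ |ρ - round ρ| → ρ ^ 2 ∈ S) (n : ℕ) (hn : 1 ≤ n) :
    (volume (Set.Icc (0:ℝ) n \ S)).toReal ≤ R ^ 2 + 36 * η * n := by
  have hsub : Set.Icc (0:ℝ) n \ S ⊆ Set.Icc 0 (R^2) ∪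
      ⋃ k ∈ Finset.range (Nat.sqrt n + 2), Set.Icc ((k:ℝ)^2 - 2 * k * η) ((k:ℝ)^2 + 2 * k * η + η ^ 2) := by
    rintro x ⟨⟨hx0, hxn⟩, hxS⟩
    by_cases hxR : x ≤ R ^ 2
    · exact Or.inl ⟨hx0, hxR⟩
    right
    push Not at hxR
    have hsq := Real.sq_sqrt hx0
    have hs0 := Real.sqrt_nonneg x
    set s := Real.sqrt x with hs
    have hRs : R ≤ s := Real.le_sqrt_of_sq_le hxR.le
    have hfar : |s - round s| < η := by
      by_contra hcon
      push Not at hcon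
      exact hxS (hsq ▸ h s hRs hcon)
    have hk0 : 0 ≤ round s := by
      have := abs_sub_round s
      have h3 := (abs_le.mp this).2
      have : (-1 : ℝ) < (round s : ℝ) := by linarith
      have : (-1 : ℤ) < round s := by exact_mod_cast this
      omega
    obtain ⟨k, hk⟩ := Int.eq_ofNat_of_zero_le hk0
    have hkr : ((round s : ℤ) : ℝ) = (k : ℝ) := by rw [hk]; simp
    have hhalf := abs_sub_round s
    rw [hkr] at hfar hhalf
    obtain ⟨f1, f2⟩ := abs_lt.mp hfar
    obtain ⟨g1, g2⟩ := abs_le.mp hhalf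
    have hkN : k < Nat.sqrt n + 2 := by
      have h1 : s ≤ Real.sqrt n := Real.sqrt_le_sqrt hxn
      have h2 : Real.sqrt n ≤ Nat.sqrt n + 1 := Real.real_sqrt_le_nat_sqrt_succ
      have : (k : ℝ) < (Nat.sqrt n + 2 : ℕ) := by push_cast; linarith
      exact_mod_cast this
    refine mem_biUnion (Finset.mem_coe.mpr (Finset.mem_range.mpr hkN)) ?_
    have hk0' : (0:ℝ) ≤ k := Nat.cast_nonneg k
    rw [← hsq]
    constructor
    · rcases Nat.eq_zero_or_pos k with rfl | hkpos
      · simp; positivity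
      · have : (1:ℝ) ≤ k := by exact_mod_cast hkpos
        nlinarith
    · nlinarith
  have hN : ((Nat.sqrt n + 2 : ℕ) : ℝ) ^ 2 ≤ 9 * n := by
    have h1 : 1 ≤ Nat.sqrt n := Nat.sqrt_pos.mpr hn
    have h2 : Nat.sqrt n * Nat.sqrt n ≤ n := Nat.sqrt_le n
    have : (Nat.sqrt n + 2) ^ 2 ≤ 9 * n := by nlinarith
    exact_mod_cast this
  have hvol : volume (Set.Icc (0:ℝ) n \ S) ≤ ENNReal.ofReal (R ^ 2 + 36 * η * n) := by
    refine (measure_mono hsub).trans ((measure_union_le _ _).trans ?_)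
    rw [ENNReal.ofReal_add (by positivity) (by positivity)]
    refine add_le_add (by simp) ?_
    refine (measure_biUnion_finset_le _ _).trans ?_
    calc ∑ k ∈ Finset.range (Nat.sqrt n + 2), volume (Set.Icc ((k:ℝ)^2 - 2 * k * η) ((k:ℝ)^2 + 2 * k * η + η ^ 2))
        ≤ ∑ k ∈ Finset.range (Nat.sqrt n + 2), ENNReal.ofReal (4 * η * (Nat.sqrt n + 2 : ℕ)) := by
          refine Finset.sum_le_sum fun k hk => ?_
          rw [Real.volume_Icc]
          apply ENNReal.ofReal_le_ofReal
          have : k + 1 ≤ Nat.sqrt n + 2 := Finset.mem_range.mp hk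
          have : (k:ℝ) + 1 ≤ (Nat.sqrt n + 2 : ℕ) := by exact_mod_cast this
          nlinarith
      _ = ENNReal.ofReal (4 * η * ((Nat.sqrt n + 2 : ℕ):ℝ)^2) := by
          rw [Finset.sum_const, Finset.card_range, nsmul_eq_mul, ← ENNReal.ofReal_natCast,
            ← ENNReal.ofReal_mul (by positivity)]
          congr 1; ring
      _ ≤ _ := by
          apply ENNReal.ofReal_le_ofReal
          nlinarith
  exact ENNReal.toReal_le_of_le_ofReal (by positivity) hvol

theorem measure_part (S : Set ℝ) (h : ∀ δ : ℝ, 0 < δ → ∀ᶠ ρ : ℝ in atTop,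
      δ ≤ |Real.cos (ρ * (Real.pi/2))| → δ ≤ |Real.sin (ρ * (Real.pi/2))| → ρ ^ 2 ∈ S) :
    Tendsto (fun n : ℕ => (volume (Set.Icc (0:ℝ) (n : ℝ) \ S)).toReal /
        (volume (S ∩ Set.Icc (0:ℝ) (n : ℝ))).toReal) atTop (𝓝 0) := by
  have key : ∀ ε : ℝ, 0 < ε → ∀ᶠ n : ℕ in atTop, (volume (Set.Icc (0:ℝ) n \ S)).toReal ≤ ε * n := by
    intro ε hε
    set η := min 1 (ε / 72) with hη
    have hη0 : 0 < η := lt_min one_pos (by positivity)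
    have hη1 : η ≤ 1 := min_le_left _ _
    have hη2 : η ≤ ε / 72 := min_le_right _ _
    obtain ⟨R, hR⟩ := eventually_atTop.mp (h η hη0)
    have hb := bad_bound S η (max R 0) hη0 hη1 (le_max_right _ _) (fun ρ hρ hf =>
      hR ρ ((le_max_left _ _).trans hρ) (sin_cos_of_far ρ η hf).1 (sin_cos_of_far ρ η hf).2)
    have ht : Tendsto (fun n : ℕ => ε / 2 * (n:ℝ)) atTop atTop :=
      tendsto_natCast_atTop_atTop.const_mul_atTop (by positivity)
    filter_upwards [ht.eventually_ge_atTop ((max R 0)^2), eventually_ge_atTop 1] with n hn hn1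
    refine (hb n hn1).trans ?_
    have : 36 * η * n ≤ 36 * (ε / 72) * n := by gcongr
    linarith
  rw [Metric.tendsto_nhds]
  intro ε hε
  set e := min (1/2) (ε / 4) with he
  have he0 : 0 < e := lt_min (by norm_num) (by positivity)
  have he1 : e ≤ 1/2 := min_le_left _ _
  have he2 : e ≤ ε/4 := min_le_right _ _
  filter_upwards [key e he0, eventually_ge_atTop 1] with n hn hn1
  have hn1' : (1:ℝ) ≤ n := by exact_mod_cast hn1
  set a := (volume (Set.Icc (0:ℝ) n \ S)).toReal with ha
  set b := (volume (S ∩ Set.Icc (0:ℝ) n)).toReal with hb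
  have ha0 : 0 ≤ a := ENNReal.toReal_nonneg
  have hfin : volume (Set.Icc (0:ℝ) n) ≠ ⊤ := by simp
  have hab : (n:ℝ) ≤ a + b := by
    have h1 : volume (Set.Icc (0:ℝ) n) ≤ volume (Set.Icc (0:ℝ) n \ S) + volume (S ∩ Set.Icc (0:ℝ) n) := by
      refine (measure_mono ?_).trans (measure_union_le _ _)
      intro x hx
      by_cases hxS : x ∈ S
      · exact Or.inr ⟨hxS, hx⟩
      · exact Or.inl ⟨hx, hxS⟩
    have f1 : volume (Set.Icc (0:ℝ) n \ S) ≠ ⊤ := measure_ne_top_of_subset diff_subset hfin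
    have f2 : volume (S ∩ Set.Icc (0:ℝ) n) ≠ ⊤ := measure_ne_top_of_subset inter_subset_right hfin
    have h2 := ENNReal.toReal_mono (ENNReal.add_ne_top.mpr ⟨f1, f2⟩) h1
    rw [ENNReal.toReal_add f1 f2] at h2
    simpa using h2
  have hbn : (n:ℝ)/2 ≤ b := by nlinarith
  have hb0 : 0 < b := by linarith
  rw [dist_zero_right, Real.norm_eq_abs, abs_of_nonneg (by positivity), div_lt_iff₀ hb0]
  nlinarith

end aux3

/-- if `m` is odd then the real component of the spectrum of `L(Q)`
contains the main part of `[0, ∞)`: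
`μ([0,n] \ σ(L(Q))) / μ(σ(L(Q)) ∩ [0,n]) → 0` as `n → ∞`. -/
theorem statement18 {m : ℕ} (hm : 1 ≤ m) (hmodd : Odd m)
    (Q : ℝ → Matrix (Fin m) (Fin m) ℂ)
    (hQcont : Continuous Q)
    (hQper : ∀ x : ℝ, Q (x + Real.pi) = Q x)
    (hQPT : ∀ (x : ℝ) (i j : Fin m), (starRingEnd ℂ) (Q (-x) i j) = Q x i j) :
    Filter.Tendsto
      (fun n : ℕ =>
        (volume (Set.Icc (0:ℝ) (n : ℝ) \ {x : ℝ | ((x : ℂ)) ∈ SpecLQ Q})).toReal /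
        (volume ({x : ℝ | ((x : ℂ)) ∈ SpecLQ Q} ∩ Set.Icc (0:ℝ) (n : ℝ))).toReal)
      Filter.atTop (nhds 0) := by
  exact measure_part _ (fun δ hδ => spec_large hmodd Q hQcont hQper hQPT δ hδ)
end
end

section
/- Suppose the matrix A has at least three real eigenvalues μ_{j₁}, μ_{j₂}, μ_{j₃}, each of odd algebraic multiplicity, such that d ≠ 0, where d = min over all triples (i₁,i₂,i₃) of indices of real eigenvalues of A of diam({μ_{j₁} + μ_{i₁}, μ_{j₂} + μ_{i₂}, μ_{j₃} + μ_{i₃}}), and diam(E) = sup_{x,y ∈ E} |x − y|. Then there exists a real number H such that [H, ∞) ⊆ σ(L(Q)). -/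
open MeasureTheory Set Filter Topology Metric

open scoped Classical

noncomputable section

/-- The mean matrix `A = ∫₀^π Q(x) dx`. -/
def meanMatrix {m : ℕ} (Q : ℝ → Matrix (Fin m) (Fin m) ℂ) : Matrix (Fin m) (Fin m) ℂ :=
  Matrix.of fun i j => ∫ x in (0:ℝ)..Real.pi, Q x i j


section ode

theorem expBound_pos {E : Type*} [NormedAddCommGroup E] [NormedSpace ℝ E]
    (f : ℝ → E) (c L : ℝ) (hL : 0 < L) (hc : 0 ≤ c)
    (hf : ∀ t, ‖f t‖ ≤ c * Real.exp (L * |t|)) (x : ℝ) (hx : 0 ≤ x) :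
    ‖∫ t in (0:ℝ)..x, f t‖ ≤ c / L * Real.exp (L * |x|) := by
  have h1 : ‖∫ t in (0:ℝ)..x, f t‖ ≤ ∫ t in (0:ℝ)..x, c * Real.exp (L * t) := by
    apply intervalIntegral.norm_integral_le_of_norm_le hx
    · refine Filter.Eventually.of_forall fun t ht => ?_
      have := hf t
      rwa [abs_of_pos ht.1] at this
    · exact Continuous.intervalIntegrable (by fun_prop) _ _
  have h2 : (∫ t in (0:ℝ)..x, c * Real.exp (L * t)) = c / L * Real.exp (L * x) - c / L := by
    rw [intervalIntegral.integral_eq_sub_of_hasDerivAt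
      (f := fun t => c / L * Real.exp (L * t))]
    · simp
    · intro t _
      have h := (((hasDerivAt_id t).const_mul L).exp).const_mul (c / L)
      have e : c * Real.exp (L * t) = c / L * (Real.exp (L * t) * (L * 1)) := by
        field_simp
      rw [e]
      exact h
    · exact Continuous.intervalIntegrable (by fun_prop) _ _
  rw [abs_of_nonneg hx]
  have : 0 ≤ c / L := by positivity
  linarith

theorem expBound {E : Type*} [NormedAddCommGroup E] [NormedSpace ℝ E]
    (f : ℝ → E) (c L : ℝ) (hL : 0 < L) (hc : 0 ≤ c)
    (hf : ∀ t, ‖f t‖ ≤ c * Real.exp (L * |t|)) (x : ℝ) :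
    ‖∫ t in (0:ℝ)..x, f t‖ ≤ c / L * Real.exp (L * |x|) := by
  rcases le_total 0 x with hx | hx
  · exact expBound_pos f c L hL hc hf x hx
  · have := expBound_pos (fun t => f (-t)) c L hL hc
      (fun t => by simpa using hf (-t)) (-x) (by linarith)
    rw [intervalIntegral.integral_comp_neg (fun t => f t), intervalIntegral.integral_symm] at this
    simpa using this

theorem exists_linear_ode {𝔸 : Type*} [NormedRing 𝔸] [NormedAlgebra ℝ 𝔸] [CompleteSpace 𝔸]
    (B : ℝ → 𝔸) (hB : Continuous B) (b : ℝ) (hb : ∀ x, ‖B x‖ ≤ b) :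
    ∃ Y : ℝ → 𝔸, Y 0 = 1 ∧ ∀ x, HasDerivAt Y (B x * Y x) x := by
  have hb0 : 0 ≤ b := (norm_nonneg _).trans (hb 0)
  obtain ⟨L, hLdef⟩ : ∃ L, L = 2 * b + 1 := ⟨_, rfl⟩
  have hL : 0 < L := by linarith
  have hint : ∀ u : ℝ → 𝔸, Continuous u →
      Continuous (fun x => ∫ t in (0:ℝ)..x, B t * (Real.exp (L * |t|) • u t)) := by
    intro u hu
    apply intervalIntegral.continuous_primitive
    intro a b
    exact Continuous.intervalIntegrable (by fun_prop) _ _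
  have hbd : ∀ (u : ℝ → 𝔸) (C : ℝ), 0 ≤ C → (∀ x, ‖u x‖ ≤ C) → ∀ x,
      ‖∫ t in (0:ℝ)..x, B t * (Real.exp (L * |t|) • u t)‖ ≤ b * C / L * Real.exp (L * |x|) := by
    intro u C hC hu x
    apply expBound _ _ _ hL (by positivity)
    intro t
    refine (norm_mul_le _ _).trans ?_
    rw [norm_smul, Real.norm_eq_abs, abs_of_pos (Real.exp_pos _)]
    have := mul_le_mul (hb t) (mul_le_mul_of_nonneg_left (hu t) (Real.exp_pos (L * |t|)).le)
      (by positivity) hb0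
    linarith
  have hexp : ∀ x : ℝ, Real.exp (-(L * |x|)) * Real.exp (L * |x|) = 1 := by
    intro x; rw [← Real.exp_add]; simp
  have hexp1 : ∀ x : ℝ, Real.exp (-(L * |x|)) ≤ 1 := by
    intro x; rw [Real.exp_le_one_iff]; have := abs_nonneg x; nlinarith
  let T : BoundedContinuousFunction ℝ 𝔸 → BoundedContinuousFunction ℝ 𝔸 := fun u =>
    BoundedContinuousFunction.ofNormedAddCommGroup
      (fun x => Real.exp (-(L * |x|)) • (1 + ∫ t in (0:ℝ)..x, B t * (Real.exp (L * |t|) • u t)))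
      (by
        have := hint u u.continuous
        fun_prop)
      (‖(1:𝔸)‖ + b * ‖u‖ / L)
      (by
        intro x
        rw [norm_smul, Real.norm_eq_abs, abs_of_pos (Real.exp_pos _)]
        have h1 := hbd u ‖u‖ (norm_nonneg _) (fun x => u.norm_coe_le_norm x) x
        have h2 := norm_add_le (1:𝔸) (∫ t in (0:ℝ)..x, B t * (Real.exp (L * |t|) • u t))
        have h3 := mul_le_mul_of_nonneg_left (h2.trans (add_le_add_right h1 _))
          (Real.exp_pos (-(L * |x|))).le
        refine h3.trans ?_
        rw [mul_add]
        have h4 := mul_le_mul_of_nonneg_right (hexp1 x) (norm_nonneg (1:𝔸))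
        have h5 : Real.exp (-(L * |x|)) * (b * ‖u‖ / L * Real.exp (L * |x|)) = b * ‖u‖ / L := by
          linear_combination (b * ‖u‖ / L) * hexp x
        linarith)
  have hT : ContractingWith (1/2) T := by
    refine ⟨?_, ?_⟩
    · apply NNReal.coe_lt_coe.1; push_cast; norm_num
    refine LipschitzWith.of_dist_le_mul fun u v => ?_
    rw [BoundedContinuousFunction.dist_le (by positivity)]
    intro x
    have h0 : ∀ w : BoundedContinuousFunction ℝ 𝔸, IntervalIntegrable
        (fun t => B t * (Real.exp (L * |t|) • w t)) volume 0 x := fun w =>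
      Continuous.intervalIntegrable (by have := w.continuous; fun_prop) _ _
    have e1 : T u x - T v x = Real.exp (-(L * |x|)) •
        ∫ t in (0:ℝ)..x, B t * (Real.exp (L * |t|) • (u t - v t)) := by
      have : (∫ t in (0:ℝ)..x, B t * (Real.exp (L * |t|) • (u t - v t))) =
          (∫ t in (0:ℝ)..x, B t * (Real.exp (L * |t|) • u t)) -
          (∫ t in (0:ℝ)..x, B t * (Real.exp (L * |t|) • v t)) := by
        rw [← intervalIntegral.integral_sub (h0 u) (h0 v)]
        congr 1; ext t; rw [smul_sub, mul_sub]
      rw [this]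
      simp only [T, BoundedContinuousFunction.coe_ofNormedAddCommGroup]
      rw [← smul_sub]; congr 1; abel
    rw [dist_eq_norm, e1, norm_smul, Real.norm_eq_abs, abs_of_pos (Real.exp_pos _)]
    have h1 := hbd (fun t => u t - v t) (dist u v) dist_nonneg
      (fun x => by rw [← dist_eq_norm]; exact BoundedContinuousFunction.dist_coe_le_dist x) x
    have h3 := mul_le_mul_of_nonneg_left h1 (Real.exp_pos (-(L * |x|))).le
    have h5 : Real.exp (-(L * |x|)) * (b * dist u v / L * Real.exp (L * |x|))
        = b / L * dist u v := by
      linear_combination (b * dist u v / L) * hexp x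
    have h6 : b / L ≤ 1/2 := by rw [div_le_iff₀ hL]; linarith
    have h7 := mul_le_mul_of_nonneg_right h6 (dist_nonneg (x := u) (y := v))
    push_cast
    linarith
  let u := ContractingWith.fixedPoint T hT
  have hu : T u = u := hT.fixedPoint_isFixedPt
  have hY : ∀ x, Real.exp (L * |x|) • u x
      = 1 + ∫ t in (0:ℝ)..x, B t * (Real.exp (L * |t|) • u t) := by
    intro x
    have : T u x = u x := by rw [hu]
    rw [← this]
    simp only [T, BoundedContinuousFunction.coe_ofNormedAddCommGroup]
    rw [smul_smul, mul_comm, hexp, one_smul]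
  refine ⟨fun x => Real.exp (L * |x|) • u x, ?_, ?_⟩
  · show Real.exp (L * |(0:ℝ)|) • u 0 = 1
    rw [hY]; simp
  · intro x
    have hc : Continuous fun t => B t * (Real.exp (L * |t|) • u t) := by
      have := u.continuous; fun_prop
    have := (intervalIntegral.integral_hasDerivAt_right (hc.intervalIntegrable 0 x)
      hc.stronglyMeasurable.stronglyMeasurableAtFilter hc.continuousAt).const_add 1
    have e : (fun x => Real.exp (L * |x|) • u x) = fun x =>
      1 + ∫ t in (0:ℝ)..x, B t * (Real.exp (L * |t|) • u t) := funext hY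
    rw [e]
    simpa only [← hY] using this

theorem linear_ode_unique {𝔸 : Type*} [NormedRing 𝔸] [NormedAlgebra ℝ 𝔸]
    (B : ℝ → 𝔸) (b : ℝ) (hb : ∀ x, ‖B x‖ ≤ b) (Y Z : ℝ → 𝔸)
    (hY : ∀ x, HasDerivAt Y (B x * Y x) x) (hZ : ∀ x, HasDerivAt Z (B x * Z x) x)
    (h0 : Y 0 = Z 0) : Y = Z := by
  have hb0 : 0 ≤ b := (norm_nonneg _).trans (hb 0)
  refine ODE_solution_unique_univ (v := fun t y => B t * y) (s := fun _ => Set.univ)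
    (K := ⟨b, hb0⟩) (t₀ := 0) ?_ (fun t => ⟨hY t, trivial⟩) (fun t => ⟨hZ t, trivial⟩) h0
  intro t
  refine LipschitzOnWith.of_dist_le_mul fun y _ z _ => ?_
  rw [dist_eq_norm, dist_eq_norm, ← mul_sub]
  exact (norm_mul_le _ _).trans (mul_le_mul_of_nonneg_right (hb t) (norm_nonneg _))

theorem gronwall_near_one {𝔸 : Type*} [NormedRing 𝔸] [NormedAlgebra ℝ 𝔸]
    (B : ℝ → 𝔸) (b : ℝ) (hbp : 0 < b) (hb : ∀ x, ‖B x‖ ≤ b) (Y : ℝ → 𝔸)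
    (hY : ∀ x, HasDerivAt Y (B x * Y x) x) (h0 : Y 0 = 1) (c : ℝ) (x : ℝ) (hx : x ∈ Set.Icc 0 c) :
    ‖Y x - 1‖ ≤ ‖(1:𝔸)‖ * (Real.exp (b * c) - 1) := by
  have hd : ∀ x, HasDerivAt (fun x => Y x - 1) (B x * Y x) x := fun x => (hY x).sub_const 1
  have := norm_le_gronwallBound_of_norm_deriv_right_le (f := fun x => Y x - 1)
    (f' := fun x => B x * Y x) (δ := 0) (K := b) (ε := b * ‖(1:𝔸)‖) (a := 0) (b := c)
    (fun x _ => (hd x).continuousAt.continuousWithinAt)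
    (fun x _ => (hd x).hasDerivWithinAt) (by simp [h0]) (fun x _ => by
      have e : B x * Y x = B x * (Y x - 1) + B x * 1 := by rw [← mul_add]; simp
      rw [e]
      refine (norm_add_le _ _).trans (add_le_add ?_ ?_)
      · exact (norm_mul_le _ _).trans (mul_le_mul_of_nonneg_right (hb x) (norm_nonneg _))
      · exact (norm_mul_le _ _).trans (mul_le_mul_of_nonneg_right (hb x) (norm_nonneg _))) x hx
  refine this.trans ?_
  rw [gronwallBound_of_K_ne_0 hbp.ne']
  have : Real.exp (b * x) ≤ Real.exp (b * c) :=
    Real.exp_le_exp.2 (mul_le_mul_of_nonneg_left hx.2 hbp.le)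
  simp only [zero_mul, zero_add, sub_zero]
  rw [mul_div_cancel_left₀ _ hbp.ne']
  exact mul_le_mul_of_nonneg_left (by linarith) (norm_nonneg _)

end ode

section linalg

theorem circle_pos {m : ℕ} (M : Matrix (Fin m ⊕ Fin m) (Fin m ⊕ Fin m) ℂ)
    (hM : M.map (starRingEnd ℂ) * M = 1)
    (hne : ∀ θ : ℝ, (M - Complex.exp (Complex.I * θ) • 1).det ≠ 0) (θ₀ θ₁ : ℝ) :
    0 ≤ ((Complex.exp (-(Complex.I * θ₁)) ^ m * (M - Complex.exp (Complex.I * θ₁) • 1).det) /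
      (Complex.exp (-(Complex.I * θ₀)) ^ m * (M - Complex.exp (Complex.I * θ₀) • 1).det)).re := by
  obtain ⟨d, hd⟩ : ∃ d, d = (M.map (starRingEnd ℂ)).det := ⟨_, rfl⟩
  have hd0 : d ≠ 0 := by
    intro h
    have := congrArg Matrix.det hM
    rw [Matrix.det_mul, ← hd, h] at this
    simp at this
  obtain ⟨g, hg⟩ : ∃ g : ℝ → ℂ, g = fun θ : ℝ => Complex.exp (-(Complex.I * θ)) ^ m *
    (M - Complex.exp (Complex.I * θ) • 1).det := ⟨_, rfl⟩
  have hg0 : ∀ θ, g θ ≠ 0 := fun θ => by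
    rw [hg]; exact mul_ne_zero (pow_ne_zero _ (Complex.exp_ne_zero _)) (hne θ)
  have hcz : ∀ θ : ℝ, (starRingEnd ℂ) (Complex.exp (Complex.I * θ))
      = Complex.exp (-(Complex.I * θ)) := by
    intro θ; rw [← Complex.exp_conj]; simp
  have hcz' : ∀ θ : ℝ, (starRingEnd ℂ) (Complex.exp (-(Complex.I * θ)))
      = Complex.exp (Complex.I * θ) := by
    intro θ; rw [← Complex.exp_conj]; simp
  have hzz : ∀ θ : ℝ, Complex.exp (-(Complex.I * θ)) * Complex.exp (Complex.I * θ) = 1 := by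
    intro θ; rw [← Complex.exp_add]; simp
  have hconj : ∀ θ, (starRingEnd ℂ) (g θ) = d * g θ := by
    intro θ
    rw [hg]
    simp only [map_mul, map_pow, hcz']
    rw [RingHom.map_det]
    have e : (starRingEnd ℂ).mapMatrix (M - Complex.exp (Complex.I * θ) • 1)
        = M.map (starRingEnd ℂ) *
          (-(Complex.exp (-(Complex.I * θ))) • (M - Complex.exp (Complex.I * θ) • 1)) := by
      rw [map_sub, mul_smul_comm, mul_sub, mul_smul_comm, mul_one]
      rw [hM, smul_sub, smul_smul, neg_mul, hzz]
      have : (starRingEnd ℂ).mapMatrix (Complex.exp (Complex.I * θ) •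
          (1 : Matrix (Fin m ⊕ Fin m) (Fin m ⊕ Fin m) ℂ)) =
          Complex.exp (-(Complex.I * θ)) • 1 := by
        ext i j
        by_cases h : i = j
        · subst h; simp [hcz]
        · simp [h]
      rw [this]
      simp only [RingHom.mapMatrix_apply, neg_smul, one_smul]
      abel
    rw [e, Matrix.det_mul, Matrix.det_smul, ← hd]
    have : (-(Complex.exp (-(Complex.I * θ)))) ^ Fintype.card (Fin m ⊕ Fin m)
      = Complex.exp (-(Complex.I * θ)) ^ m * Complex.exp (-(Complex.I * θ)) ^ m := by
      rw [Fintype.card_sum, Fintype.card_fin, pow_add, neg_pow]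
      have h1 : ((-1:ℂ)^m) * (-1)^m = 1 := by rw [← mul_pow]; simp
      linear_combination (Complex.exp (-(Complex.I * θ)) ^ m)^2 * h1
    rw [this]
    have h2 : Complex.exp (Complex.I * θ) ^ m * Complex.exp (-(Complex.I * θ)) ^ m = 1 := by
      rw [← mul_pow, mul_comm, hzz, one_pow]
    linear_combination d * Complex.exp (-(Complex.I * θ)) ^ m *
      (M - Complex.exp (Complex.I * θ) • 1).det * h2
  have hgc : Continuous g := by
    rw [hg]
    refine Continuous.mul (f := fun θ : ℝ => Complex.exp (-(Complex.I * θ)) ^ m)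
      (by fun_prop) (Continuous.matrix_det ?_)
    refine continuous_const.sub ?_
    have : Continuous fun θ : ℝ => Complex.exp (Complex.I * θ) := by fun_prop
    exact this.smul continuous_const
  have him : ∀ θ, (g θ / g θ₀).im = 0 := by
    intro θ
    rw [← Complex.conj_eq_iff_im, map_div₀, hconj, hconj, mul_div_mul_left _ _ hd0]
  have hre : ∀ θ, (g θ / g θ₀).re ≠ 0 := by
    intro θ h
    have : g θ / g θ₀ = 0 := Complex.ext h (him θ)
    exact div_ne_zero (hg0 _) (hg0 _) this
  have key : 0 ≤ (g θ₁ / g θ₀).re := by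
    by_contra hneg
    push Not at hneg
    have hc : Continuous fun θ => (g θ / g θ₀).re :=
      Complex.continuous_re.comp (hgc.div_const _)
    have h1 : (g θ₀ / g θ₀).re = 1 := by rw [div_self (hg0 _)]; simp
    obtain ⟨θ, hθ⟩ := mem_range_of_exists_le_of_exists_ge hc ⟨θ₁, hneg.le⟩
      ⟨θ₀, by rw [h1]; norm_num⟩
    exact hre θ hθ
  rw [hg] at key
  exact key

theorem sign_lemma (P : Polynomial ℂ) (hP : P ≠ 0) (μ : ℝ)
    (hodd : Odd (P.rootMultiplicity (μ : ℂ))) (h : ℝ → ℂ) (hc : ContinuousAt h μ)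
    (hμ : h μ ≠ 0) :
    ∃ s₁ s₂ : ℝ, P.eval (s₁ : ℂ) * h s₁ ≠ 0 ∧
      ((P.eval (s₂ : ℂ) * h s₂) / (P.eval (s₁ : ℂ) * h s₁)).re < 0 := by
  obtain ⟨R, hR, hnd⟩ := Polynomial.exists_eq_pow_rootMultiplicity_mul_and_not_dvd P hP (μ : ℂ)
  obtain ⟨k, hk⟩ : ∃ k, k = P.rootMultiplicity (μ : ℂ) := ⟨_, rfl⟩
  rw [← hk] at hR hodd
  have hRμ : R.eval (μ : ℂ) ≠ 0 := by
    rwa [Polynomial.dvd_iff_isRoot] at hnd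
  obtain ⟨f, hf⟩ : ∃ f : ℝ → ℂ, f = fun s : ℝ => R.eval (s : ℂ) * h s := ⟨_, rfl⟩
  have hfc : ContinuousAt f μ := by
    rw [hf]
    refine ContinuousAt.mul ?_ hc
    exact (R.continuous.comp Complex.continuous_ofReal).continuousAt
  have hfμ : f μ ≠ 0 := by rw [hf]; exact mul_ne_zero hRμ hμ
  have t1 : Tendsto (fun ε : ℝ => f (μ + ε)) (𝓝 0) (𝓝 (f μ)) := by
    refine Tendsto.comp hfc ?_
    have : Continuous fun ε : ℝ => μ + ε := by fun_prop
    simpa using this.tendsto 0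
  have t2 : Tendsto (fun ε : ℝ => f (μ - ε)) (𝓝 0) (𝓝 (f μ)) := by
    refine Tendsto.comp hfc ?_
    have : Continuous fun ε : ℝ => μ - ε := by fun_prop
    simpa using this.tendsto 0
  have t3 := t1.div t2 hfμ
  rw [div_self hfμ] at t3
  have t4 := (Complex.continuous_re.tendsto _).comp t3
  have e1 : ∀ᶠ ε : ℝ in 𝓝[>] 0, 0 < (f (μ + ε) / f (μ - ε)).re :=
    (t4.eventually (lt_mem_nhds (by simp))).filter_mono nhdsWithin_le_nhds
  have e2 : ∀ᶠ ε : ℝ in 𝓝[>] 0, f (μ - ε) ≠ 0 :=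
    (t2.eventually_ne hfμ).filter_mono nhdsWithin_le_nhds
  obtain ⟨ε, ⟨h1, h2⟩, h3⟩ := ((e1.and e2).and self_mem_nhdsWithin).exists
  have hε : (ε : ℂ) ≠ 0 := by exact_mod_cast (ne_of_gt h3)
  have hεk : (ε : ℂ) ^ k ≠ 0 := pow_ne_zero _ hε
  have p1 : P.eval ((μ - ε : ℝ) : ℂ) * h (μ - ε) = -((ε : ℂ) ^ k * f (μ - ε)) := by
    rw [hR, hf]
    simp only [Polynomial.eval_mul, Polynomial.eval_pow, Polynomial.eval_sub, Polynomial.eval_X,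
      Polynomial.eval_C]
    have : (((μ - ε : ℝ) : ℂ) - (μ : ℂ)) ^ k = - (ε : ℂ) ^ k := by
      rw [← hodd.neg_pow]; congr 1; push_cast; ring
    rw [this]; ring
  have p2 : P.eval ((μ + ε : ℝ) : ℂ) * h (μ + ε) = (ε : ℂ) ^ k * f (μ + ε) := by
    rw [hR, hf]
    simp only [Polynomial.eval_mul, Polynomial.eval_pow, Polynomial.eval_sub, Polynomial.eval_X,
      Polynomial.eval_C]
    have : (((μ + ε : ℝ) : ℂ) - (μ : ℂ)) ^ k = (ε : ℂ) ^ k := by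
      congr 1; push_cast; ring
    rw [this]; ring
  refine ⟨μ - ε, μ + ε, ?_, ?_⟩
  · rw [p1]; exact neg_ne_zero.2 (mul_ne_zero hεk h2)
  · rw [p1, p2, div_neg, mul_div_mul_left _ _ hεk, Complex.neg_re]
    linarith

end linalg

section mono

open scoped Matrix

attribute [local instance] Matrix.linftyOpNormedRing Matrix.linftyOpNormedAlgebra

/-- coefficient matrix -/
def Bmat {m : ℕ} (Q : ℝ → Matrix (Fin m) (Fin m) ℂ) (ρ x : ℝ) :
    Matrix (Fin m ⊕ Fin m) (Fin m ⊕ Fin m) ℂ :=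
  (Complex.I * ρ) • Matrix.fromBlocks 1 0 0 (-1) +
    (2 * Complex.I * ρ)⁻¹ • Matrix.fromBlocks (Q x) (Q x) (-Q x) (-Q x)

theorem bloch_of_Y {m : ℕ} (Q : ℝ → Matrix (Fin m) (Fin m) ℂ) (hQ : Continuous Q)
    (ρ : ℝ) (hρ : ρ ≠ 0)
    (Y : ℝ → Matrix (Fin m ⊕ Fin m) (Fin m ⊕ Fin m) ℂ) (hY0 : Y 0 = 1)
    (hY : ∀ x, HasDerivAt Y (Bmat Q ρ x * Y x) x)
    (hper : ∀ x, Y (x + Real.pi) = Y x * Y Real.pi) (θ : ℝ)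
    (hdet : (Y Real.pi - Complex.exp (Complex.I * θ) • 1).det = 0) :
    ((ρ : ℂ) ^ 2) ∈ SpecLQ Q := by
  have hρ' : (ρ : ℂ) ≠ 0 := by exact_mod_cast hρ
  obtain ⟨z, hz⟩ : ∃ z, z = Complex.exp (Complex.I * θ) := ⟨_, rfl⟩
  rw [← hz] at hdet
  have hz1 : ‖z‖ = 1 := by rw [hz, mul_comm, Complex.norm_exp_ofReal_mul_I]
  obtain ⟨v, hv0, hv⟩ := Matrix.exists_mulVec_eq_zero_iff.2 hdet
  have hv' : Y Real.pi *ᵥ v = z • v := by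
    rw [Matrix.sub_mulVec, Matrix.smul_mulVec, Matrix.one_mulVec, sub_eq_zero] at hv
    exact hv
  let lp : Matrix (Fin m ⊕ Fin m) (Fin m ⊕ Fin m) ℂ →ₗ[ℝ] (Fin m → ℂ) :=
    { toFun := fun M i => (M *ᵥ v) (Sum.inl i) + (M *ᵥ v) (Sum.inr i)
      map_add' := by intro M N; ext i; simp [Matrix.add_mulVec]; ring
      map_smul' := by intro c M; ext i; simp [Matrix.smul_mulVec] }
  let lm : Matrix (Fin m ⊕ Fin m) (Fin m ⊕ Fin m) ℂ →ₗ[ℝ] (Fin m → ℂ) :=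
    { toFun := fun M i => (M *ᵥ v) (Sum.inl i) - (M *ᵥ v) (Sum.inr i)
      map_add' := by intro M N; ext i; simp [Matrix.add_mulVec]; ring
      map_smul' := by intro c M; ext i; simp [Matrix.smul_mulVec, mul_sub] }
  have hBl : ∀ x M i, ((Bmat Q ρ x * M) *ᵥ v) (Sum.inl i) =
      Complex.I * ρ * (M *ᵥ v) (Sum.inl i) + (2 * Complex.I * ρ)⁻¹ * (Q x *ᵥ lp M) i := by
    intro x M i
    have : lp M = (M *ᵥ v) ∘ Sum.inl + (M *ᵥ v) ∘ Sum.inr := rfl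
    rw [this, ← Matrix.mulVec_mulVec, Bmat, Matrix.add_mulVec, Matrix.smul_mulVec,
      Matrix.smul_mulVec, Matrix.fromBlocks_mulVec, Matrix.fromBlocks_mulVec, Matrix.mulVec_add]
    simp
  have hBr : ∀ x M i, ((Bmat Q ρ x * M) *ᵥ v) (Sum.inr i) =
      -(Complex.I * ρ * (M *ᵥ v) (Sum.inr i)) - (2 * Complex.I * ρ)⁻¹ * (Q x *ᵥ lp M) i := by
    intro x M i
    have : lp M = (M *ᵥ v) ∘ Sum.inl + (M *ᵥ v) ∘ Sum.inr := rfl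
    rw [this, ← Matrix.mulVec_mulVec, Bmat, Matrix.add_mulVec, Matrix.smul_mulVec,
      Matrix.smul_mulVec, Matrix.fromBlocks_mulVec, Matrix.fromBlocks_mulVec, Matrix.mulVec_add]
    simp [Matrix.neg_mulVec]
    ring
  have hp : ∀ x M, lp (Bmat Q ρ x * M) = (Complex.I * ρ) • lm M := by
    intro x M; ext i
    show ((Bmat Q ρ x * M) *ᵥ v) (Sum.inl i) + ((Bmat Q ρ x * M) *ᵥ v) (Sum.inr i) =
      (Complex.I * ρ) * ((M *ᵥ v) (Sum.inl i) - (M *ᵥ v) (Sum.inr i))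
    rw [hBl, hBr]; ring
  have hm : ∀ x M, (Complex.I * ρ) • lm (Bmat Q ρ x * M)
      = Q x *ᵥ lp M - ((ρ:ℂ)^2) • lp M := by
    intro x M; ext i
    show (Complex.I * ρ) * (((Bmat Q ρ x * M) *ᵥ v) (Sum.inl i)
      - ((Bmat Q ρ x * M) *ᵥ v) (Sum.inr i)) =
      (Q x *ᵥ lp M) i - (ρ:ℂ)^2 * ((M *ᵥ v) (Sum.inl i) + (M *ᵥ v) (Sum.inr i))
    rw [hBl, hBr]
    have hI := Complex.I_ne_zero
    have hI2 := Complex.I_sq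
    have key : Complex.I * ρ * (2 * Complex.I * ρ)⁻¹ = 1 / 2 := by field_simp
    linear_combination 2 * (Q x *ᵥ lp M) i * key + ((M *ᵥ v) (Sum.inl i) + (M *ᵥ v) (Sum.inr i)) * ρ ^ 2 * hI2
  let Ψ : ℝ → Fin m → ℂ := fun x => lp (Y x)
  let Ψ1 : ℝ → Fin m → ℂ := fun x => (Complex.I * ρ) • lm (Y x)
  have d1 : ∀ x, HasDerivAt Ψ (Ψ1 x) x := by
    intro x
    have := (LinearMap.toContinuousLinearMap lp).hasFDerivAt.comp_hasDerivAt x (hY x)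
    have e : (LinearMap.toContinuousLinearMap lp) (Bmat Q ρ x * Y x) = Ψ1 x := hp x (Y x)
    exact this.congr_deriv e
  have d2 : ∀ x, HasDerivAt Ψ1 (Q x *ᵥ Ψ x - ((ρ:ℂ)^2) • Ψ x) x := by
    intro x
    have := ((LinearMap.toContinuousLinearMap lm).hasFDerivAt.comp_hasDerivAt x
      (hY x)).const_smul (Complex.I * ρ)
    have e : (Complex.I * ρ) • (LinearMap.toContinuousLinearMap lm) (Bmat Q ρ x * Y x)
      = Q x *ᵥ Ψ x - ((ρ:ℂ)^2) • Ψ x := hm x (Y x)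
    exact this.congr_deriv e
  have e1 : deriv Ψ = Ψ1 := funext fun x => (d1 x).deriv
  have e2 : deriv Ψ1 = fun x => Q x *ᵥ Ψ x - ((ρ:ℂ)^2) • Ψ x := funext fun x => (d2 x).deriv
  have hΨc : Continuous Ψ := continuous_iff_continuousAt.2 fun x => (d1 x).continuousAt
  have hcd : ContDiff ℝ 2 Ψ := by
    have h1 : ContDiff ℝ 1 Ψ1 := by
      rw [contDiff_one_iff_deriv]
      refine ⟨fun x => (d2 x).differentiableAt, ?_⟩
      rw [e2]
      exact (Continuous.matrix_mulVec hQ hΨc).sub (by fun_prop : Continuous fun x => ((ρ:ℂ)^2) • Ψ x)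
    rw [show (2 : WithTop ℕ∞) = 1 + 1 by norm_num, contDiff_succ_iff_deriv]
    refine ⟨fun x => (d1 x).differentiableAt, by simp, ?_⟩
    rw [e1]; exact h1
  have hne : Ψ ≠ 0 := by
    intro h
    have a1 : Ψ 0 = 0 := by rw [h]; rfl
    have a2 : Ψ1 0 = 0 := by rw [← e1, h]; simp
    apply hv0
    have b1 : ∀ i, v (Sum.inl i) + v (Sum.inr i) = 0 := by
      intro i
      have := congrFun a1 i
      have e : Ψ 0 i = (Y 0 *ᵥ v) (Sum.inl i) + (Y 0 *ᵥ v) (Sum.inr i) := rfl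
      rw [e, hY0, Matrix.one_mulVec] at this
      exact this
    have b2 : ∀ i, v (Sum.inl i) - v (Sum.inr i) = 0 := by
      intro i
      have := congrFun a2 i
      have e : Ψ1 0 i = (Complex.I * ρ) * ((Y 0 *ᵥ v) (Sum.inl i) - (Y 0 *ᵥ v) (Sum.inr i)) := rfl
      rw [e, hY0, Matrix.one_mulVec] at this
      have := (mul_eq_zero.1 this).resolve_left (mul_ne_zero Complex.I_ne_zero hρ')
      exact this
    ext i
    rcases i with i | i
    · show v (Sum.inl i) = 0
      linear_combination (b1 i) / 2 + (b2 i) / 2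
    · show v (Sum.inr i) = 0
      linear_combination (b1 i) / 2 - (b2 i) / 2
  refine ⟨z.arg / Real.pi, ⟨?_, ?_⟩, Ψ, hne, hcd, ?_, ?_⟩
  · rw [lt_div_iff₀ Real.pi_pos]
    have := Complex.neg_pi_lt_arg z
    linarith
  · rw [div_le_iff₀ Real.pi_pos]
    have := Complex.arg_le_pi z
    linarith
  · intro x
    rw [e1, e2]
    simp
  · intro x
    have hph : blochPhase (z.arg / Real.pi) = z := by
      rw [blochPhase]
      have : Complex.I * Real.pi * ((z.arg / Real.pi : ℝ) : ℂ) = z.arg * Complex.I := by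
        have : (Real.pi : ℂ) ≠ 0 := by exact_mod_cast Real.pi_ne_zero
        push_cast
        field_simp
      rw [this]
      have h := Complex.norm_mul_exp_arg_mul_I z
      rw [hz1] at h
      simpa using h
    rw [hph]
    ext i
    show (Y (x + Real.pi) *ᵥ v) (Sum.inl i) + (Y (x + Real.pi) *ᵥ v) (Sum.inr i) =
      z * ((Y x *ᵥ v) (Sum.inl i) + (Y x *ᵥ v) (Sum.inr i))
    rw [hper, ← Matrix.mulVec_mulVec, hv', Matrix.mulVec_smul]
    simp
    ring

end mono

section mono2

open scoped Matrix

attribute [local instance] Matrix.linftyOpNormedRing Matrix.linftyOpNormedAlgebra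

theorem periodic_bdd {E : Type*} [NormedAddCommGroup E] (f : ℝ → E) (hf : Continuous f)
    (hp : ∀ x, f (x + Real.pi) = f x) : ∃ K, 0 ≤ K ∧ ∀ x, ‖f x‖ ≤ K := by
  obtain ⟨K, hK⟩ := isCompact_Icc.exists_bound_of_continuousOn (s := Set.Icc 0 Real.pi)
    hf.continuousOn
  refine ⟨K, (norm_nonneg _).trans (hK 0 ⟨le_rfl, Real.pi_pos.le⟩), fun x => ?_⟩
  obtain ⟨y, hy, hxy⟩ := Function.Periodic.exists_mem_Ico₀ (f := f) hp Real.pi_pos x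
  rw [hxy]
  exact hK y ⟨hy.1, hy.2.le⟩

/-- diagonal part -/
def F0 {m : ℕ} (Q : ℝ → Matrix (Fin m) (Fin m) ℂ) (x : ℝ) :
    Matrix (Fin m ⊕ Fin m) (Fin m ⊕ Fin m) ℂ := Matrix.fromBlocks (Q x) 0 0 (-Q x)
/-- upper part -/
def F1 {m : ℕ} (Q : ℝ → Matrix (Fin m) (Fin m) ℂ) (x : ℝ) :
    Matrix (Fin m ⊕ Fin m) (Fin m ⊕ Fin m) ℂ := Matrix.fromBlocks 0 (Q x) 0 0
/-- lower part -/
def F2 {m : ℕ} (Q : ℝ → Matrix (Fin m) (Fin m) ℂ) (x : ℝ) :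
    Matrix (Fin m ⊕ Fin m) (Fin m ⊕ Fin m) ℂ := Matrix.fromBlocks 0 0 (-Q x) 0
/-- rotated coefficient -/
def Gmat {m : ℕ} (Q : ℝ → Matrix (Fin m) (Fin m) ℂ) (ρ x : ℝ) :
    Matrix (Fin m ⊕ Fin m) (Fin m ⊕ Fin m) ℂ :=
  F0 Q x + Complex.exp (-(2 * ρ * x : ℝ) * Complex.I) • F1 Q x
    + Complex.exp ((2 * ρ * x : ℝ) * Complex.I) • F2 Q x
/-- diagonal exponential -/
def Dmat {m : ℕ} (y : ℝ) : Matrix (Fin m ⊕ Fin m) (Fin m ⊕ Fin m) ℂ :=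
  Complex.exp (y * Complex.I) • Matrix.fromBlocks 1 0 0 0 +
  Complex.exp (-y * Complex.I) • Matrix.fromBlocks 0 0 0 1

theorem F0_cont {m : ℕ} (Q : ℝ → Matrix (Fin m) (Fin m) ℂ) (hQ : Continuous Q) :
    Continuous (F0 Q) := by unfold F0; exact Continuous.matrix_fromBlocks hQ (by fun_prop) (by fun_prop) hQ.neg
theorem F1_cont {m : ℕ} (Q : ℝ → Matrix (Fin m) (Fin m) ℂ) (hQ : Continuous Q) :
    Continuous (F1 Q) := by unfold F1; exact Continuous.matrix_fromBlocks (by fun_prop) hQ (by fun_prop) (by fun_prop)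
theorem F2_cont {m : ℕ} (Q : ℝ → Matrix (Fin m) (Fin m) ℂ) (hQ : Continuous Q) :
    Continuous (F2 Q) := by unfold F2; exact Continuous.matrix_fromBlocks (by fun_prop) (by fun_prop) hQ.neg (by fun_prop)

theorem Gmat_cont {m : ℕ} (Q : ℝ → Matrix (Fin m) (Fin m) ℂ) (hQ : Continuous Q) (ρ : ℝ) :
    Continuous (Gmat Q ρ) := by
  have h0 := F0_cont Q hQ
  have h1 := F1_cont Q hQ
  have h2 := F2_cont Q hQ
  unfold Gmat
  fun_prop

theorem Gmat_bdd {m : ℕ} (Q : ℝ → Matrix (Fin m) (Fin m) ℂ) (hQ : Continuous Q)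
    (hQper : ∀ x : ℝ, Q (x + Real.pi) = Q x) : ∃ K : ℝ, 0 < K ∧ ∀ ρ x, ‖Gmat Q ρ x‖ ≤ K := by
  obtain ⟨K0, h0, h0'⟩ := periodic_bdd (F0 Q) (F0_cont Q hQ) (fun x => by simp [F0, hQper])
  obtain ⟨K1, h1, h1'⟩ := periodic_bdd (F1 Q) (F1_cont Q hQ) (fun x => by simp [F1, hQper])
  obtain ⟨K2, h2, h2'⟩ := periodic_bdd (F2 Q) (F2_cont Q hQ) (fun x => by simp [F2, hQper])
  refine ⟨K0 + K1 + K2 + 1, by positivity, fun ρ x => ?_⟩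
  have a1 : ‖Complex.exp (-(2 * ρ * x : ℝ) * Complex.I) • F1 Q x‖ ≤ K1 := by
    rw [norm_smul, ← Complex.ofReal_neg, Complex.norm_exp_ofReal_mul_I, one_mul]; exact h1' x
  have a2 : ‖Complex.exp ((2 * ρ * x : ℝ) * Complex.I) • F2 Q x‖ ≤ K2 := by
    rw [norm_smul, Complex.norm_exp_ofReal_mul_I, one_mul]; exact h2' x
  unfold Gmat
  refine (norm_add_le _ _).trans ?_
  have := norm_add_le (F0 Q x) (Complex.exp (-(2 * ρ * x : ℝ) * Complex.I) • F1 Q x)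
  have := h0' x
  linarith

theorem Dmat_zero {m : ℕ} : (Dmat 0 : Matrix (Fin m ⊕ Fin m) (Fin m ⊕ Fin m) ℂ) = 1 := by
  simp [Dmat, Matrix.fromBlocks_add]

theorem Dmat_deriv {m : ℕ} (ρ x : ℝ) :
    HasDerivAt (fun x => (Dmat (ρ * x) : Matrix (Fin m ⊕ Fin m) (Fin m ⊕ Fin m) ℂ))
      (((Complex.I * ρ) • Matrix.fromBlocks 1 0 0 (-1)) * Dmat (ρ * x)) x := by
  have h0 : HasDerivAt (fun x : ℝ => ((ρ * x : ℝ) : ℂ)) (ρ : ℂ) x := by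
    have := ((hasDerivAt_id x).const_mul ρ).ofReal_comp
    simpa using this
  have h1 := ((h0.mul_const Complex.I).cexp).smul_const
    (Matrix.fromBlocks 1 0 0 0 : Matrix (Fin m ⊕ Fin m) (Fin m ⊕ Fin m) ℂ)
  have h2 := ((h0.neg.mul_const Complex.I).cexp).smul_const
    (Matrix.fromBlocks 0 0 0 1 : Matrix (Fin m ⊕ Fin m) (Fin m ⊕ Fin m) ℂ)
  refine (h1.add h2).congr_deriv ?_
  rw [Dmat, smul_mul_assoc, mul_add, mul_smul_comm, mul_smul_comm, Matrix.fromBlocks_multiply,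
    Matrix.fromBlocks_multiply, Matrix.fromBlocks_smul, Matrix.fromBlocks_smul,
    Matrix.fromBlocks_smul, Matrix.fromBlocks_smul, Matrix.fromBlocks_add, Matrix.fromBlocks_add,
    Matrix.fromBlocks_smul]
  congr 1
  · simp [smul_smul]; congr 1; ring
  · simp
  · simp
  · simp [smul_smul]; congr 1; ring

theorem Dmat_Gmat {m : ℕ} (Q : ℝ → Matrix (Fin m) (Fin m) ℂ) (ρ x : ℝ) :
    Dmat (ρ * x) * Gmat Q ρ x =
      Matrix.fromBlocks (Q x) (Q x) (-Q x) (-Q x) * Dmat (ρ * x) := by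
  have e1 : Complex.exp (((ρ * x : ℝ) : ℂ) * Complex.I) *
      Complex.exp (-(2 * ρ * x : ℝ) * Complex.I) = Complex.exp (-((ρ * x : ℝ):ℂ) * Complex.I) := by
    rw [← Complex.exp_add]; congr 1; push_cast; ring
  have e2 : Complex.exp (-((ρ * x : ℝ) : ℂ) * Complex.I) *
      Complex.exp ((2 * ρ * x : ℝ) * Complex.I) = Complex.exp (((ρ * x : ℝ):ℂ) * Complex.I) := by
    rw [← Complex.exp_add]; congr 1; push_cast; ring
  simp only [Dmat, Gmat, F0, F1, F2, Matrix.fromBlocks_smul, Matrix.fromBlocks_add,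
    Matrix.fromBlocks_multiply]
  congr 1
  · simp
  · rw [← e1]; simp [smul_smul, mul_comm]
  · rw [← e2]; simp [smul_smul, mul_comm]
  · simp

theorem exists_mono {m : ℕ} (Q : ℝ → Matrix (Fin m) (Fin m) ℂ) (hQ : Continuous Q)
    (hQper : ∀ x : ℝ, Q (x + Real.pi) = Q x)
    (hQPT : ∀ (x : ℝ) (i j : Fin m), (starRingEnd ℂ) (Q (-x) i j) = Q x i j)
    (ρ : ℝ) :
    ∃ Y C : ℝ → Matrix (Fin m ⊕ Fin m) (Fin m ⊕ Fin m) ℂ, Y 0 = 1 ∧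
      (∀ x, HasDerivAt Y (Bmat Q ρ x * Y x) x) ∧
      (∀ x, Y (x + Real.pi) = Y x * Y Real.pi) ∧
      (Y Real.pi).map (starRingEnd ℂ) * Y Real.pi = 1 ∧
      C 0 = 1 ∧ (∀ x, HasDerivAt C (((2 * Complex.I * ρ)⁻¹ • Gmat Q ρ x) * C x) x) ∧
      ∀ x, Y x = Dmat (ρ * x) * C x := by
  obtain ⟨K, hK0, hK⟩ := Gmat_bdd Q hQ hQper
  obtain ⟨C, hC0, hC⟩ := exists_linear_ode (fun x => (2 * Complex.I * ρ)⁻¹ • Gmat Q ρ x)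
    (by have := Gmat_cont Q hQ ρ; fun_prop) (‖(2 * Complex.I * ρ)⁻¹‖ * K)
    (fun x => by
      rw [norm_smul]; exact mul_le_mul_of_nonneg_left (hK ρ x) (norm_nonneg _))
  have hBc : Continuous (Bmat Q ρ) := by
    unfold Bmat
    have : Continuous fun x => Matrix.fromBlocks (Q x) (Q x) (-Q x) (-Q x) :=
      Continuous.matrix_fromBlocks hQ hQ hQ.neg hQ.neg
    fun_prop
  have hBp : ∀ x, Bmat Q ρ (x + Real.pi) = Bmat Q ρ x := fun x => by simp [Bmat, hQper]
  obtain ⟨b, -, hb⟩ := periodic_bdd (Bmat Q ρ) hBc hBp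
  obtain ⟨Y, hYdef⟩ : ∃ Y : ℝ → Matrix (Fin m ⊕ Fin m) (Fin m ⊕ Fin m) ℂ,
    Y = fun x => Dmat (ρ * x) * C x := ⟨_, rfl⟩
  have hY0 : Y 0 = 1 := by rw [hYdef]; simp [hC0, Dmat_zero]
  have hY : ∀ x, HasDerivAt Y (Bmat Q ρ x * Y x) x := by
    intro x
    have := (Dmat_deriv (m := m) ρ x).mul (hC x)
    rw [hYdef]
    refine this.congr_deriv ?_
    show _ = Bmat Q ρ x * (Dmat (ρ * x) * C x)
    rw [← mul_assoc, ← mul_assoc, ← add_mul, mul_smul_comm, Dmat_Gmat, Bmat]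
    simp only [add_mul, smul_mul_assoc]
  have hper : ∀ x, Y (x + Real.pi) = Y x * Y Real.pi := by
    have := linear_ode_unique (Bmat Q ρ) b hb (fun x => Y (x + Real.pi))
      (fun x => Y x * Y Real.pi) (fun x => by
        have := (hY (x + Real.pi)).comp_add_const x Real.pi
        rwa [hBp] at this) (fun x => by
        have := (hY x).mul_const (Y Real.pi)
        rwa [mul_assoc] at this) (by simp [hY0])
    exact fun x => congrFun this x
  let l : Matrix (Fin m ⊕ Fin m) (Fin m ⊕ Fin m) ℂ →ₗ[ℝ]
      Matrix (Fin m ⊕ Fin m) (Fin m ⊕ Fin m) ℂ :=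
    { toFun := fun M => M.map (starRingEnd ℂ)
      map_add' := by intro M N; ext i j; simp
      map_smul' := by intro c M; ext i j; simp }
  have hl : ∀ M N, l (M * N) = l M * l N := fun M N => Matrix.map_mul
  have hlB : ∀ x, -l (Bmat Q ρ (-x)) = Bmat Q ρ x := by
    intro x
    have hq : (Q (-x)).map (starRingEnd ℂ) = Q x := by ext i j; exact hQPT x i j
    show -(Bmat Q ρ (-x)).map (starRingEnd ℂ) = Bmat Q ρ x
    have h2 : (starRingEnd ℂ) 2 = 2 := map_ofNat _ 2
    ext i j
    rcases i with i | i <;> rcases j with j | j <;>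
      simp [Bmat, hQPT, Matrix.one_apply, apply_ite (starRingEnd ℂ), h2] <;> split_ifs <;> ring
  have hconj : ∀ x, l (Y (-x)) = Y x := by
    have := linear_ode_unique (Bmat Q ρ) b hb (fun x => l (Y (-x))) Y (fun x => by
      have h1 := (hY (-x)).scomp x (hasDerivAt_neg x)
      have h2 := (LinearMap.toContinuousLinearMap l).hasFDerivAt.comp_hasDerivAt x h1
      refine h2.congr_deriv ?_
      show l ((-1 : ℝ) • (Bmat Q ρ (-x) * Y (-x))) = Bmat Q ρ x * l (Y (-x))
      rw [map_smul, hl]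
      conv_rhs => rw [← hlB]
      simp) hY (by
        show l (Y (-0)) = Y 0
        rw [neg_zero, hY0]
        exact Matrix.map_one _ (map_zero _) (map_one _))
    exact fun x => congrFun this x
  refine ⟨Y, C, hY0, hY, hper, ?_, hC0, hC, fun x => by rw [hYdef]⟩
  have h1 := hper (-Real.pi)
  rw [neg_add_cancel, hY0] at h1
  have h2 := hconj (-Real.pi)
  rw [neg_neg] at h2
  have h3 : (Y Real.pi).map (starRingEnd ℂ) = Y (-Real.pi) := h2
  rw [h3, ← h1]

end mono2

section asym

open scoped Matrix

theorem rl_aux {E : Type*} [NormedAddCommGroup E] [NormedSpace ℂ E] (f : ℝ → E) (a : ℝ)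
    (ha : a ≠ 0) :
    Tendsto (fun ρ : ℝ => ∫ x in (0:ℝ)..Real.pi, Complex.exp ((a * ρ * x : ℝ) * Complex.I) • f x)
      atTop (𝓝 0) := by
  have h := Real.tendsto_integral_exp_smul_cocompact (Set.indicator (Set.Ioc 0 Real.pi) f)
  have h2 : Tendsto (fun ρ : ℝ => -(a / (2 * Real.pi)) * ρ) atTop (cocompact ℝ) := by
    have hc : -(a / (2 * Real.pi)) ≠ 0 := by
      have := Real.pi_ne_zero
      exact neg_ne_zero.2 (div_ne_zero ha (by positivity))
    rw [cocompact_eq_atBot_atTop]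
    rcases lt_or_gt_of_ne hc with hc | hc
    · exact (tendsto_id.const_mul_atTop_of_neg hc).mono_right le_sup_left
    · exact (tendsto_id.const_mul_atTop hc).mono_right le_sup_right
  refine (h.comp h2).congr fun ρ => ?_
  rw [intervalIntegral.integral_of_le Real.pi_pos.le, ← integral_indicator measurableSet_Ioc]
  refine integral_congr_ae (Eventually.of_forall fun x => ?_)
  by_cases hx : x ∈ Set.Ioc 0 Real.pi
  · simp only [Set.indicator_of_mem hx]
    rw [Circle.smul_def, Real.fourierChar_apply]
    congr 2
    congr 1
    norm_cast
    have := Real.pi_ne_zero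
    field_simp
  · simp [Set.indicator_of_notMem hx]

attribute [local instance] Matrix.linftyOpNormedRing Matrix.linftyOpNormedAlgebra

theorem integral_F0 {m : ℕ} (Q : ℝ → Matrix (Fin m) (Fin m) ℂ) (hQ : Continuous Q) :
    ∫ x in (0:ℝ)..Real.pi, F0 Q x =
      Matrix.fromBlocks (meanMatrix Q) 0 0 (-meanMatrix Q) := by
  have key : ∀ i j, (∫ x in (0:ℝ)..Real.pi, F0 Q x) i j = ∫ x in (0:ℝ)..Real.pi, F0 Q x i j := by
    intro i j
    exact (ContinuousLinearMap.intervalIntegral_comp_comm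
      (LinearMap.toContinuousLinearMap (Matrix.entryLinearMap ℂ ℂ i j))
      ((F0_cont Q hQ).intervalIntegrable _ _)).symm
  ext i j
  rw [key]
  rcases i with i | i <;> rcases j with j | j <;> simp [F0, meanMatrix]

theorem asym {m : ℕ} (Q : ℝ → Matrix (Fin m) (Fin m) ℂ) (hQ : Continuous Q)
    (hQper : ∀ x : ℝ, Q (x + Real.pi) = Q x)
    (C : ℝ → ℝ → Matrix (Fin m ⊕ Fin m) (Fin m ⊕ Fin m) ℂ)
    (hC0 : ∀ ρ, C ρ 0 = 1)
    (hC : ∀ ρ x, HasDerivAt (C ρ) (((2 * Complex.I * ρ)⁻¹ • Gmat Q ρ x) * C ρ x) x) :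
    Tendsto (fun ρ : ℝ => (2 * Complex.I * ρ) • (C ρ Real.pi - 1)) atTop
      (𝓝 (Matrix.fromBlocks (meanMatrix Q) 0 0 (-meanMatrix Q))) := by
  obtain ⟨K, hK0, hK⟩ := Gmat_bdd Q hQ hQper
  have hCc : ∀ ρ, Continuous (C ρ) := fun ρ =>
    continuous_iff_continuousAt.2 fun x => (hC ρ x).continuousAt
  have c0 := F0_cont Q hQ
  have c1 := F1_cont Q hQ
  have c2 := F2_cont Q hQ
  have cG := Gmat_cont Q hQ
  have t1 := rl_aux (F1 Q) (-2) (by norm_num)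
  have t2 := rl_aux (F2 Q) 2 (by norm_num)
  have t3 : Tendsto (fun ρ : ℝ => ∫ x in (0:ℝ)..Real.pi, Gmat Q ρ x * (C ρ x - 1)) atTop
      (𝓝 0) := by
    have hb : Tendsto (fun ρ : ℝ => K * (‖(1 : Matrix (Fin m ⊕ Fin m) (Fin m ⊕ Fin m) ℂ)‖ *
        (Real.exp ((2 * ρ)⁻¹ * K * Real.pi) - 1)) * |Real.pi - 0|) atTop (𝓝 0) := by
      have h1 : Tendsto (fun ρ : ℝ => (2 * ρ)⁻¹) atTop (𝓝 0) :=
        tendsto_inv_atTop_zero.comp (tendsto_id.const_mul_atTop (by norm_num))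
      have h2 : Continuous fun y : ℝ => K * (‖(1 : Matrix (Fin m ⊕ Fin m) (Fin m ⊕ Fin m) ℂ)‖ *
        (Real.exp (y * K * Real.pi) - 1)) * |Real.pi - 0| := by fun_prop
      have := (h2.tendsto 0).comp h1
      simpa [Function.comp_def] using this
    refine squeeze_zero_norm' ?_ hb
    filter_upwards [eventually_gt_atTop 0] with ρ hρ
    apply intervalIntegral.norm_integral_le_of_norm_le_const
    intro x hx
    rw [Set.uIoc_of_le Real.pi_pos.le] at hx
    refine (norm_mul_le _ _).trans (mul_le_mul (hK ρ x) ?_ (norm_nonneg _) hK0.le)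
    have hn : ‖(2 * Complex.I * ρ)⁻¹‖ = (2 * ρ)⁻¹ := by
      simp [abs_of_pos hρ]
    exact gronwall_near_one (fun x => (2 * Complex.I * ρ)⁻¹ • Gmat Q ρ x) ((2 * ρ)⁻¹ * K)
      (by positivity) (fun x => by
        rw [norm_smul, hn]; exact mul_le_mul_of_nonneg_left (hK ρ x) (by positivity))
      (C ρ) (hC ρ) (hC0 ρ) Real.pi x ⟨hx.1.le, hx.2⟩
  have t4 := ((tendsto_const_nhds (x := ∫ x in (0:ℝ)..Real.pi, F0 Q x)).add t1).add t2 |>.add t3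
  rw [integral_F0 Q hQ, add_zero, add_zero, add_zero] at t4
  refine t4.congr' ?_
  filter_upwards [eventually_gt_atTop 0] with ρ hρ
  have hρ' : (2 * Complex.I * ρ) ≠ 0 := by
    simp [hρ.ne']
  have ftc : ∫ x in (0:ℝ)..Real.pi, ((2 * Complex.I * ρ)⁻¹ • Gmat Q ρ x) * C ρ x
      = C ρ Real.pi - C ρ 0 := by
    refine intervalIntegral.integral_eq_sub_of_hasDerivAt (fun x _ => hC ρ x) ?_
    have a := cG ρ
    have b := hCc ρ
    exact Continuous.intervalIntegrable (by fun_prop) _ _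
  rw [hC0] at ftc
  rw [← ftc, ← intervalIntegral.integral_smul, ← integral_F0 Q hQ]
  have a := cG ρ
  have b := hCc ρ
  rw [← intervalIntegral.integral_add, ← intervalIntegral.integral_add,
    ← intervalIntegral.integral_add]
  · congr 1
    ext1 x
    rw [smul_mul_assoc, smul_smul, mul_inv_cancel₀ hρ', one_smul, mul_sub, mul_one]
    have e : F0 Q x + Complex.exp ((-2 * ρ * x : ℝ) * Complex.I) • F1 Q x
      + Complex.exp ((2 * ρ * x : ℝ) * Complex.I) • F2 Q x = Gmat Q ρ x := by
      rw [Gmat]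
      congr 5
      push_cast; ring
    rw [e]; abel
  all_goals exact Continuous.intervalIntegrable (by fun_prop) _ _

end asym

section final

open scoped Matrix

/-- The upper diagonal entry. -/
def alphaF (ρ s : ℝ) : ℂ := 2 * Complex.I * ρ * (1 - Complex.exp (-(Complex.I * (s / (2 * ρ)))))

/-- The lower diagonal entry. -/
def betaF (ρ s : ℝ) : ℂ :=
  2 * Complex.I * ρ * (1 - Complex.exp (2 * Complex.I * ρ * Real.pi) *
    Complex.exp (-(Complex.I * (s / (2 * ρ)))))

/-- The resonance parameter. -/
def wF (ρ : ℝ) : ℂ := 2 * Complex.I * ρ * (1 - Complex.exp (2 * Complex.I * ρ * Real.pi))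

theorem betaF_eq (ρ s : ℝ) :
    betaF ρ s = wF ρ + Complex.exp (2 * Complex.I * ρ * Real.pi) * alphaF ρ s := by
  unfold betaF wF alphaF; ring

theorem Dmat_eq {m : ℕ} (y : ℝ) : (Dmat y : Matrix (Fin m ⊕ Fin m) (Fin m ⊕ Fin m) ℂ) =
    Matrix.fromBlocks (Complex.exp (y * Complex.I) • 1) 0 0 (Complex.exp (-y * Complex.I) • 1) := by
  simp [Dmat, Matrix.fromBlocks_add, Matrix.fromBlocks_smul]

theorem Dmat_det_ne {m : ℕ} (y : ℝ) :
    (Dmat y : Matrix (Fin m ⊕ Fin m) (Fin m ⊕ Fin m) ℂ).det ≠ 0 := by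
  rw [Dmat_eq, Matrix.det_fromBlocks_zero₂₁]
  simp [Complex.exp_ne_zero]

theorem det_id {m : ℕ} (ρ s : ℝ)
    (C : Matrix (Fin m ⊕ Fin m) (Fin m ⊕ Fin m) ℂ) :
    (2 * Complex.I * ρ) • (Dmat (ρ * Real.pi) * C -
      Complex.exp (Complex.I * ((ρ * Real.pi - s / (2 * ρ) : ℝ) : ℂ)) • 1) =
    Dmat (ρ * Real.pi) * ((2 * Complex.I * ρ) • (C - 1) +
      Matrix.fromBlocks (alphaF ρ s • 1) 0 0 (betaF ρ s • 1)) := by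
  have h : (2 * Complex.I * ρ) • (Dmat (ρ * Real.pi) : Matrix (Fin m ⊕ Fin m) (Fin m ⊕ Fin m) ℂ)
      - (2 * Complex.I * ρ) •
        Complex.exp (Complex.I * ((ρ * Real.pi - s / (2 * ρ) : ℝ) : ℂ)) • 1
      = Dmat (ρ * Real.pi) * Matrix.fromBlocks (alphaF ρ s • 1) 0 0 (betaF ρ s • 1) := by
    rw [Dmat_eq, ← Matrix.fromBlocks_one, Matrix.fromBlocks_multiply]
    simp only [Matrix.fromBlocks_smul, sub_eq_add_neg, Matrix.fromBlocks_neg, Matrix.fromBlocks_add]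
    congr 1
    · simp only [smul_smul, ← neg_smul, ← add_smul, mul_zero, add_zero, smul_mul_assoc, one_mul]
      congr 1
      have e : Complex.exp (Complex.I * ((ρ * Real.pi + -(s / (2 * ρ)) : ℝ) : ℂ)) =
        Complex.exp (((ρ * Real.pi : ℝ) : ℂ) * Complex.I) *
          Complex.exp (-(Complex.I * (s / (2 * ρ)))) := by
        rw [← Complex.exp_add]; congr 1; push_cast; ring
      rw [e, alphaF]; ring
    · simp
    · simp
    · simp only [smul_smul, ← neg_smul, ← add_smul, zero_mul, zero_add, smul_mul_assoc, one_mul]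
      congr 1
      have e : Complex.exp (Complex.I * ((ρ * Real.pi + -(s / (2 * ρ)) : ℝ) : ℂ)) =
        Complex.exp (-((ρ * Real.pi : ℝ) : ℂ) * Complex.I) *
          (Complex.exp (2 * Complex.I * ρ * Real.pi) *
          Complex.exp (-(Complex.I * (s / (2 * ρ))))) := by
        rw [← Complex.exp_add, ← Complex.exp_add]; congr 1; push_cast; ring
      rw [e, betaF]; ring
  rw [mul_add, ← h, Matrix.mul_smul, mul_sub, mul_one, smul_sub, smul_sub]
  abel

theorem alphaF_lim (s : ℝ) : Tendsto (fun ρ : ℝ => alphaF ρ s) atTop (𝓝 (-(s : ℂ))) := by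
  have h : HasDerivAt (fun y : ℝ => Complex.exp (-(Complex.I * (s * y)))) (-(Complex.I * s)) 0 := by
    have h1 : HasDerivAt (fun y : ℝ => -(Complex.I * (s * y))) (-(Complex.I * (s * 1))) 0 :=
      ((((hasDerivAt_id (0:ℝ)).ofReal_comp).const_mul (s : ℂ)).const_mul Complex.I).neg
    have := h1.cexp
    simpa using this
  have h2 := h.tendsto_slope_zero_right
  have h3 : Tendsto (fun ρ : ℝ => (2 * ρ)⁻¹) atTop (𝓝[>] 0) :=
    tendsto_inv_atTop_nhdsGT_zero.comp (tendsto_id.const_mul_atTop (by norm_num))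
  have h4 := (h2.comp h3).const_mul (-Complex.I)
  have e : -Complex.I * -(Complex.I * s) = -(s : ℂ) := by
    rw [neg_mul_neg, ← mul_assoc, Complex.I_mul_I]; ring
  rw [e] at h4
  refine h4.congr fun ρ => ?_
  simp only [Function.comp, alphaF, Complex.real_smul, zero_add, inv_inv]
  push_cast
  simp only [mul_zero, neg_zero, Complex.exp_zero, div_eq_mul_inv]
  ring

theorem asym' {m : ℕ} (C : ℝ → Matrix (Fin m ⊕ Fin m) (Fin m ⊕ Fin m) ℂ)
    (L : Matrix (Fin m ⊕ Fin m) (Fin m ⊕ Fin m) ℂ)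
    (h : @Tendsto ℝ (Matrix (Fin m ⊕ Fin m) (Fin m ⊕ Fin m) ℂ) C atTop
      (@nhds _ (Matrix.linftyOpNormedRing (n := Fin m ⊕ Fin m) (α := ℂ)).toPseudoMetricSpace.toUniformSpace.toTopologicalSpace L)) :
    Tendsto C atTop (𝓝 L) := h

theorem limit_pos {m : ℕ} (Q : ℝ → Matrix (Fin m) (Fin m) ℂ) (hQ : Continuous Q)
    (hQper : ∀ x : ℝ, Q (x + Real.pi) = Q x)
    (hQPT : ∀ (x : ℝ) (i j : Fin m), (starRingEnd ℂ) (Q (-x) i j) = Q x i j)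
    (U : Filter ℝ) [U.NeBot] (hU : U ≤ atTop) (hbad : ∀ᶠ ρ : ℝ in U, ((ρ : ℂ) ^ 2) ∉ SpecLQ Q)
    (κ : ℝ → ℂ) (hκ0 : ∀ᶠ ρ in U, κ ρ ≠ 0) (k : ℂ) (hκ : Tendsto κ U (𝓝 k)) (b : ℝ → ℂ)
    (hb : ∀ s, Tendsto (fun ρ => κ ρ * betaF ρ s) U (𝓝 (b s))) (F : ℝ → ℂ)
    (hF : ∀ s : ℝ, F s = (meanMatrix Q + (-(s : ℂ)) • 1).det * (-(k • meanMatrix Q) + b s • 1).det)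
    (s₁ s₂ : ℝ) (h1 : F s₁ ≠ 0) : 0 ≤ (F s₂ / F s₁).re := by
  choose Y C hY0 hY hYp hYc hC0 hC hYC using fun ρ => exists_mono Q hQ hQper hQPT ρ
  have hX := (asym' _ _ (asym Q hQ hQper C hC0 hC)).mono_left hU
  obtain ⟨T, hT⟩ : ∃ T : ℝ → ℝ → Matrix (Fin m ⊕ Fin m) (Fin m ⊕ Fin m) ℂ, ∀ ρ s, T ρ s =
      (2 * Complex.I * ρ) • (C ρ Real.pi - 1) +
        Matrix.fromBlocks (alphaF ρ s • 1) 0 0 (betaF ρ s • 1) := ⟨_, fun _ _ => rfl⟩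
  have hlim : ∀ s, Tendsto (fun ρ => (κ ρ) ^ m * (T ρ s).det) U (𝓝 (F s)) := by
    intro s
    have hα := (alphaF_lim s).mono_left hU
    have h : Tendsto (fun ρ => (Matrix.fromBlocks 1 0 0 (κ ρ • 1) :
        Matrix (Fin m ⊕ Fin m) (Fin m ⊕ Fin m) ℂ) * ((2 * Complex.I * ρ) • (C ρ Real.pi - 1)) +
        Matrix.fromBlocks (alphaF ρ s • 1) 0 0 ((κ ρ * betaF ρ s) • 1)) U
        (𝓝 ((Matrix.fromBlocks 1 0 0 (k • 1) : Matrix (Fin m ⊕ Fin m) (Fin m ⊕ Fin m) ℂ) *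
          Matrix.fromBlocks (meanMatrix Q) 0 0 (-meanMatrix Q) +
          Matrix.fromBlocks ((-(s : ℂ)) • 1) 0 0 (b s • 1))) := by
      have c1 : Continuous fun z : ℂ => (Matrix.fromBlocks 1 0 0 (z • 1) :
        Matrix (Fin m ⊕ Fin m) (Fin m ⊕ Fin m) ℂ) :=
        Continuous.matrix_fromBlocks (by fun_prop) (by fun_prop) (by fun_prop) (by fun_prop)
      have c2 : Continuous fun z : ℂ × ℂ => (Matrix.fromBlocks (z.1 • 1) 0 0 (z.2 • 1) :
        Matrix (Fin m ⊕ Fin m) (Fin m ⊕ Fin m) ℂ) :=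
        Continuous.matrix_fromBlocks (by fun_prop) (by fun_prop) (by fun_prop) (by fun_prop)
      have l1 := (c1.tendsto k).comp hκ
      have l2 := (c2.tendsto (-(s : ℂ), b s)).comp (hα.prodMk_nhds (hb s))
      have l3 := l1.mul hX
      exact l3.add l2
    have hdet : Continuous fun M : Matrix (Fin m ⊕ Fin m) (Fin m ⊕ Fin m) ℂ => M.det :=
      Continuous.matrix_det continuous_id
    have h' := (hdet.tendsto _).comp h
    have e : ((Matrix.fromBlocks 1 0 0 (k • 1) : Matrix (Fin m ⊕ Fin m) (Fin m ⊕ Fin m) ℂ) *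
          Matrix.fromBlocks (meanMatrix Q) 0 0 (-meanMatrix Q) +
          Matrix.fromBlocks ((-(s : ℂ)) • 1) 0 0 (b s • 1)).det = F s := by
      rw [hF, Matrix.fromBlocks_multiply, Matrix.fromBlocks_add]
      simp only [one_mul, zero_mul, mul_zero, add_zero, zero_add]
      rw [Matrix.det_fromBlocks_zero₂₁, smul_mul_assoc, one_mul, smul_neg]
    rw [e] at h'
    refine h'.congr fun ρ => ?_
    simp only [Function.comp]
    have e2 : (Matrix.fromBlocks 1 0 0 (κ ρ • 1) :
        Matrix (Fin m ⊕ Fin m) (Fin m ⊕ Fin m) ℂ) * ((2 * Complex.I * ρ) • (C ρ Real.pi - 1)) +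
        Matrix.fromBlocks (alphaF ρ s • 1) 0 0 ((κ ρ * betaF ρ s) • 1) =
        Matrix.fromBlocks 1 0 0 (κ ρ • 1) * T ρ s := by
      rw [hT, mul_add]
      congr 1
      rw [Matrix.fromBlocks_multiply]
      simp [smul_smul, mul_comm]
    rw [e2, Matrix.det_mul, Matrix.det_fromBlocks_zero₂₁]
    simp
  have hexp : Tendsto (fun ρ : ℝ => Complex.exp (Complex.I * ((s₂ - s₁) / (2 * ρ))) ^ m) U
      (𝓝 1) := by
    have h1 : Tendsto (fun ρ : ℝ => (2 * ρ)⁻¹) atTop (𝓝 0) :=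
      tendsto_inv_atTop_zero.comp (tendsto_id.const_mul_atTop (by norm_num))
    have h2 : Continuous fun y : ℝ => Complex.exp (Complex.I * ((s₂ - s₁) * y)) ^ m := by fun_prop
    have := ((h2.tendsto 0).comp h1).mono_left hU
    simpa [Function.comp_def, div_eq_mul_inv] using this
  have hfin := hexp.mul ((hlim s₂).div (hlim s₁) h1)
  rw [one_mul] at hfin
  refine ge_of_tendsto ((Complex.continuous_re.tendsto _).comp hfin) ?_
  filter_upwards [hbad, hκ0, hU (eventually_gt_atTop 0)] with ρ hρ hk hρ0
  have hne : ∀ θ : ℝ, (Y ρ Real.pi - Complex.exp (Complex.I * θ) • 1).det ≠ 0 := fun θ h =>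
    hρ (bloch_of_Y Q hQ ρ (ne_of_gt hρ0) (Y ρ) (hY0 ρ) (hY ρ) (hYp ρ) θ h)
  have hp := circle_pos (Y ρ Real.pi) (hYc ρ) hne (ρ * Real.pi - s₁ / (2 * ρ))
    (ρ * Real.pi - s₂ / (2 * ρ))
  have hρ' : (2 * Complex.I * ρ) ≠ 0 := by
    simp [ne_of_gt hρ0]
  have hdet : ∀ s : ℝ, (2 * Complex.I * ρ) ^ (m + m) * (Y ρ Real.pi -
      Complex.exp (Complex.I * ((ρ * Real.pi - s / (2 * ρ) : ℝ) : ℂ)) • 1).det =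
      (Dmat (ρ * Real.pi) : Matrix (Fin m ⊕ Fin m) (Fin m ⊕ Fin m) ℂ).det * (T ρ s).det := by
    intro s
    have := congrArg Matrix.det (det_id ρ s (C ρ Real.pi))
    rw [Matrix.det_smul, Matrix.det_mul, ← hT, ← hYC] at this
    simpa using this
  have hD := Dmat_det_ne (m := m) (ρ * Real.pi)
  have hc : (2 * Complex.I * (ρ : ℂ)) ^ (m + m) ≠ 0 := pow_ne_zero _ hρ'
  have hdet' : ∀ s : ℝ, (Y ρ Real.pi -
      Complex.exp (Complex.I * ((ρ * Real.pi - s / (2 * ρ) : ℝ) : ℂ)) • 1).det =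
      ((Dmat (ρ * Real.pi) : Matrix (Fin m ⊕ Fin m) (Fin m ⊕ Fin m) ℂ).det /
        (2 * Complex.I * ρ) ^ (m + m)) * (T ρ s).det := by
    intro s
    rw [div_mul_eq_mul_div, eq_div_iff hc, mul_comm, hdet]
  have hTne : (T ρ s₁).det ≠ 0 := by
    intro h
    have := hne (ρ * Real.pi - s₁ / (2 * ρ))
    rw [hdet', h, mul_zero] at this
    exact this rfl
  rw [hdet', hdet'] at hp
  generalize (Dmat (ρ * Real.pi) : Matrix (Fin m ⊕ Fin m) (Fin m ⊕ Fin m) ℂ).det = D at *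
  have hq : D / (2 * Complex.I * (ρ : ℂ)) ^ (m + m) ≠ 0 := div_ne_zero hD hc
  generalize D / (2 * Complex.I * (ρ : ℂ)) ^ (m + m) = q at *
  have e3 : Complex.exp (-(Complex.I * ((ρ * Real.pi - s₂ / (2 * ρ) : ℝ) : ℂ))) =
      Complex.exp (Complex.I * ((s₂ - s₁) / (2 * ρ))) *
      Complex.exp (-(Complex.I * ((ρ * Real.pi - s₁ / (2 * ρ) : ℝ) : ℂ))) := by
    rw [← Complex.exp_add]; congr 1; push_cast; ring
  rw [e3, mul_pow] at hp
  have hex : Complex.exp (-(Complex.I * ((ρ * Real.pi - s₁ / (2 * ρ) : ℝ) : ℂ))) ^ m ≠ 0 :=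
    pow_ne_zero _ (Complex.exp_ne_zero _)
  generalize Complex.exp (-(Complex.I * ((ρ * Real.pi - s₁ / (2 * ρ) : ℝ) : ℂ))) ^ m = r at *
  refine hp.trans_eq (congrArg Complex.re ?_)
  have := pow_ne_zero m hk
  simp only [Pi.div_apply]
  field_simp

theorem wF_im (ρ : ℝ) (hρ : 0 < ρ) : (wF ρ).im = ‖wF ρ‖ ^ 2 / (4 * ρ) := by
  have e : wF ρ = ⟨2 * ρ * Real.sin (2 * ρ * Real.pi), 2 * ρ * (1 - Real.cos (2 * ρ * Real.pi))⟩ := by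
    have : (2 * Complex.I * ρ * Real.pi) = ((2 * ρ * Real.pi : ℝ) : ℂ) * Complex.I := by
      push_cast; ring
    rw [wF, this, Complex.exp_mul_I, ← Complex.ofReal_cos, ← Complex.ofReal_sin]
    generalize Real.cos (2 * ρ * Real.pi) = c
    generalize Real.sin (2 * ρ * Real.pi) = d
    apply Complex.ext <;> simp
  rw [← Complex.normSq_eq_norm_sq, e, Complex.normSq_mk, eq_div_iff (by positivity)]
  have := Real.sin_sq_add_cos_sq (2 * ρ * Real.pi)
  simp only
  linear_combination (-4 * ρ ^ 2) * this

end final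

/-- if `A` has three distinct real eigenvalues `μ_{j₁}, μ_{j₂}, μ_{j₃}`
of odd algebraic multiplicity such that
`min over triples (i₁,i₂,i₃) of real eigenvalue indices of
diam({μ_{j₁}+μ_{i₁}, μ_{j₂}+μ_{i₂}, μ_{j₃}+μ_{i₃}}) ≠ 0` (equivalently, every such
triple has nonzero diameter), then `[H, ∞) ⊆ σ(L(Q))` for some `H`. -/
theorem statement19 {m : ℕ} (hm : 1 ≤ m) (Q : ℝ → Matrix (Fin m) (Fin m) ℂ)
    (hQcont : Continuous Q)
    (hQper : ∀ x : ℝ, Q (x + Real.pi) = Q x)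
    (hQPT : ∀ (x : ℝ) (i j : Fin m), (starRingEnd ℂ) (Q (-x) i j) = Q x i j)
    (μj₁ μj₂ μj₃ : ℝ)
    (hne₁ : μj₁ ≠ μj₂) (hne₂ : μj₁ ≠ μj₃) (hne₃ : μj₂ ≠ μj₃)
    (hroot₁ : ((meanMatrix Q).charpoly).IsRoot (μj₁ : ℂ))
    (hroot₂ : ((meanMatrix Q).charpoly).IsRoot (μj₂ : ℂ))
    (hroot₃ : ((meanMatrix Q).charpoly).IsRoot (μj₃ : ℂ))
    (hodd₁ : Odd (((meanMatrix Q).charpoly).rootMultiplicity (μj₁ : ℂ)))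
    (hodd₂ : Odd (((meanMatrix Q).charpoly).rootMultiplicity (μj₂ : ℂ)))
    (hodd₃ : Odd (((meanMatrix Q).charpoly).rootMultiplicity (μj₃ : ℂ)))
    (hd : ∀ μi₁ μi₂ μi₃ : ℝ,
      ((meanMatrix Q).charpoly).IsRoot (μi₁ : ℂ) →
      ((meanMatrix Q).charpoly).IsRoot (μi₂ : ℂ) →
      ((meanMatrix Q).charpoly).IsRoot (μi₃ : ℂ) →
      Metric.diam ({μj₁ + μi₁, μj₂ + μi₂, μj₃ + μi₃} : Set ℝ) ≠ 0) :
    ∃ H : ℝ, ∀ x : ℝ, H ≤ x → ((x : ℂ)) ∈ SpecLQ Q := by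
  by_contra hcon
  push Not at hcon
  have hfreq : ∃ᶠ ρ : ℝ in atTop, ((ρ : ℂ) ^ 2) ∉ SpecLQ Q := by
    rw [frequently_atTop]
    intro a
    obtain ⟨x, hx, hxs⟩ := hcon (max a 0 ^ 2)
    have hx0 : 0 ≤ x := (sq_nonneg _).trans hx
    refine ⟨Real.sqrt x, (le_max_left a 0).trans (Real.le_sqrt_of_sq_le hx), ?_⟩
    rw [← Complex.ofReal_pow, Real.sq_sqrt hx0]
    exact hxs
  obtain ⟨U, hU, hbad⟩ : ∃ U : Ultrafilter ℝ, (U : Filter ℝ) ≤ atTop ∧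
      ∀ᶠ ρ : ℝ in (U : Filter ℝ), ((ρ : ℂ) ^ 2) ∉ SpecLQ Q := by
    have hnb : (atTop ⊓ 𝓟 {ρ : ℝ | ((ρ : ℂ) ^ 2) ∉ SpecLQ Q}).NeBot :=
      frequently_mem_iff_neBot.1 hfreq
    refine ⟨Ultrafilter.of (atTop ⊓ 𝓟 {ρ : ℝ | ((ρ : ℂ) ^ 2) ∉ SpecLQ Q}), ?_, ?_⟩
    · exact (Ultrafilter.of_le _).trans inf_le_left
    · exact ((Ultrafilter.of_le _).trans inf_le_right) (mem_principal_self _)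
  have hP0 : (meanMatrix Q).charpoly ≠ 0 := (Matrix.charpoly_monic _).ne_zero
  have hdetA : ∀ s : ℝ, (meanMatrix Q + (-(s : ℂ)) • 1).det =
      (-1) ^ m * (meanMatrix Q).charpoly.eval (s : ℂ) := by
    intro s
    have e : meanMatrix Q + (-(s : ℂ)) • 1 = -(Matrix.scalar (Fin m) (s : ℂ) - meanMatrix Q) := by
      rw [neg_sub, sub_eq_add_neg, neg_smul, Matrix.smul_one_eq_diagonal]; rfl
    rw [e, Matrix.det_neg, Matrix.eval_charpoly, Fintype.card_fin]
  have hcinv : Tendsto (fun ρ : ℝ => (2 * Complex.I * ρ)⁻¹) atTop (𝓝 0) := by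
    have h1 : Tendsto (fun ρ : ℝ => (2 * ρ)⁻¹) atTop (𝓝 0) :=
      tendsto_inv_atTop_zero.comp (tendsto_id.const_mul_atTop (by norm_num))
    have h2 := ((Complex.continuous_ofReal.tendsto 0).comp h1).const_mul (-Complex.I)
    rw [Complex.ofReal_zero, mul_zero] at h2
    refine h2.congr fun ρ => ?_
    simp only [Function.comp]
    push_cast
    rw [mul_inv, mul_inv, mul_inv, Complex.inv_I]
    ring
  by_cases hbd : ∃ R : ℝ, ∀ᶠ ρ in (U : Filter ℝ), ‖wF ρ‖ ≤ R
  · obtain ⟨R, hR⟩ := hbd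
    obtain ⟨w, -, hw⟩ : ∃ w ∈ closedBall (0 : ℂ) R, Tendsto wF (U : Filter ℝ) (𝓝 w) := by
      have := (isCompact_closedBall (0 : ℂ) R).ultrafilter_le_nhds (U.map wF) (by
        rw [le_principal_iff]
        show ∀ᶠ ρ in (U : Filter ℝ), wF ρ ∈ closedBall (0 : ℂ) R
        filter_upwards [hR] with ρ h
        simpa using h)
      exact this
    have hw_im : w.im = 0 := by
      have h1 : Tendsto (fun ρ : ℝ => ‖wF ρ‖ ^ 2 * (4 * ρ)⁻¹) U (𝓝 (‖w‖ ^ 2 * 0)) :=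
        (hw.norm.pow 2).mul ((tendsto_inv_atTop_zero.comp
          (tendsto_id.const_mul_atTop (by norm_num : (0:ℝ) < 4))).mono_left hU)
      rw [mul_zero] at h1
      refine tendsto_nhds_unique ((Complex.continuous_im.tendsto _).comp hw) (h1.congr' ?_)
      filter_upwards [hU (eventually_gt_atTop 0)] with ρ hρ
      simp only [Function.comp]
      rw [wF_im ρ hρ, div_eq_mul_inv]
    obtain ⟨w', rfl⟩ : ∃ w' : ℝ, w = (w' : ℂ) := ⟨w.re, by apply Complex.ext <;> simp [hw_im]⟩
    have he : Tendsto (fun ρ : ℝ => Complex.exp (2 * Complex.I * ρ * Real.pi)) U (𝓝 1) := by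
      have h1 := tendsto_const_nhds (x := (1 : ℂ)) |>.sub ((hcinv.mono_left hU).mul hw)
      rw [zero_mul, sub_zero] at h1
      refine h1.congr' ?_
      filter_upwards [hU (eventually_gt_atTop 0)] with ρ hρ
      have hρ' : (2 * Complex.I * ρ) ≠ 0 := by
        simp [ne_of_gt hρ]
      rw [wF, ← mul_assoc, inv_mul_cancel₀ hρ']
      ring
    have hb : ∀ s, Tendsto (fun ρ => (1 : ℂ) * betaF ρ s) U (𝓝 ((w' : ℂ) - s)) := by
      intro s
      have := hw.add (he.mul ((alphaF_lim s).mono_left hU))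
      rw [one_mul, ← sub_eq_add_neg] at this
      refine this.congr fun ρ => ?_
      rw [one_mul, betaF_eq]
    have main := limit_pos Q hQcont hQper hQPT U hU hbad (fun _ => 1)
      (Eventually.of_forall fun _ => one_ne_zero) 1 tendsto_const_nhds (fun s => (w' : ℂ) - s) hb
      (fun s => (meanMatrix Q).charpoly.eval (s : ℂ) *
        ((-1) ^ m * (meanMatrix Q).charpoly.eval ((w' : ℂ) - s))) (by
        intro s
        have e : -((1 : ℂ) • meanMatrix Q) + ((w' : ℂ) - s) • 1 =
            Matrix.scalar (Fin m) ((w' : ℂ) - s) - meanMatrix Q := by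
          rw [one_smul, neg_add_eq_sub, Matrix.smul_one_eq_diagonal]; rfl
        rw [hdetA, e, ← Matrix.eval_charpoly]
        ring)
    have use : ∀ μ : ℝ, Odd ((meanMatrix Q).charpoly.rootMultiplicity (μ : ℂ)) →
        (meanMatrix Q).charpoly.IsRoot ((w' - μ : ℝ) : ℂ) := by
      intro μ hodd
      by_contra hnr
      obtain ⟨s₁, s₂, h1, h2⟩ := sign_lemma (meanMatrix Q).charpoly hP0 μ hodd
        (fun s => (-1) ^ m * (meanMatrix Q).charpoly.eval ((w' : ℂ) - s))
        (by
          apply Continuous.continuousAt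
          have := (meanMatrix Q).charpoly.continuous
          fun_prop) (by
          refine mul_ne_zero (pow_ne_zero _ (by norm_num)) ?_
          rw [← Complex.ofReal_sub]
          exact hnr)
      exact absurd (main s₁ s₂ h1) (not_le.2 h2)
    refine hd _ _ _ (use μj₁ hodd₁) (use μj₂ hodd₂) (use μj₃ hodd₃) ?_
    simp
  · have hinf : Tendsto wF (U : Filter ℝ) (Bornology.cobounded ℂ) := by
      rw [← tendsto_norm_atTop_iff_cobounded, Filter.tendsto_atTop]
      intro R
      by_contra h
      refine hbd ⟨R, ?_⟩
      rw [← Ultrafilter.eventually_not] at h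
      filter_upwards [h] with ρ hρ
      exact (not_le.1 hρ).le
    have hinv : Tendsto (fun ρ => (wF ρ)⁻¹) (U : Filter ℝ) (𝓝 0) :=
      tendsto_inv₀_cobounded.comp hinf
    have hne : ∀ᶠ ρ in (U : Filter ℝ), wF ρ ≠ 0 :=
      hinf.eventually (Bornology.eventually_ne_cobounded 0)
    have hb : ∀ s : ℝ, Tendsto (fun ρ => (wF ρ)⁻¹ * betaF ρ s) U (𝓝 1) := by
      intro s
      have h0 : Tendsto (fun ρ : ℝ => (wF ρ)⁻¹ *
          (Complex.exp (2 * Complex.I * ρ * Real.pi) * alphaF ρ s)) U (𝓝 0) := by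
        have h1 := hinv.norm.mul ((alphaF_lim s).mono_left hU).norm
        rw [norm_zero, zero_mul] at h1
        refine squeeze_zero_norm (fun ρ => ?_) h1
        have : (2 * Complex.I * ρ * Real.pi) = ((2 * ρ * Real.pi : ℝ) : ℂ) * Complex.I := by
          push_cast; ring
        rw [norm_mul, norm_mul, this, Complex.norm_exp_ofReal_mul_I, one_mul]
      have h1 := (tendsto_const_nhds (x := (1 : ℂ))).add h0
      rw [add_zero] at h1
      refine h1.congr' ?_
      filter_upwards [hne] with ρ hρ
      rw [betaF_eq, mul_add, inv_mul_cancel₀ hρ]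
    have main := limit_pos Q hQcont hQper hQPT U hU hbad (fun ρ => (wF ρ)⁻¹)
      (hne.mono fun _ h => inv_ne_zero h) 0 hinv (fun _ => 1) hb
      (fun s => (meanMatrix Q).charpoly.eval (s : ℂ) * (-1) ^ m) (by
        intro s
        rw [hdetA, zero_smul, neg_zero, zero_add, one_smul, Matrix.det_one]
        ring)
    obtain ⟨s₁, s₂, h1, h2⟩ := sign_lemma (meanMatrix Q).charpoly hP0 μj₁ hodd₁
      (fun _ => (-1) ^ m) continuousAt_const (pow_ne_zero _ (by norm_num))
    exact absurd (main s₁ s₂ h1) (not_le.2 h2)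
end
end
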